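/- Let n ≥ 1, suppose (A,b) satisfies Setting B, let r be the invariant measure (the a.e.-unique measurable ℤⁿ-periodic function with ∫_Y r² < ∞, ∫_Y r = 1 and ∫_Y r(A:D²φ + b·∇φ) = 0 for every twice continuously differentiable ℤⁿ-periodic φ), and assume the centering condition ∫_Y r·b = 0 (componentwise). Then for each j ∈ {1,…,n} there exists a measurable ℤⁿ-periodic function χ : ℝⁿ → ℝ with ∫_Y χ² < ∞ and ∫_Y χ = 0, admitting a weak gradient g : ℝⁿ → ℝⁿ and a weak Hessian H : ℝⁿ → ℝ^{n×n} that are measurable, ℤⁿ-periodic, square-integrable over Y, with H symmetric-valued — meaning ∫_{ℝⁿ} χ ∂_i φ = −∫_{ℝⁿ} g_i φ and ∫_{ℝⁿ} χ ∂²_{ij} φ = ∫_{ℝⁿ} H_{ij} φ for every smooth compactly supported φ : ℝⁿ → ℝ and all i,j — such that −A:H − b·g = b_j almost everywhere in ℝⁿ; moreover χ is unique up to equality almost everywhere. -/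

import Mathlib

open MeasureTheory

noncomputable section

/-- The unit cell `Y = (0,1)^n`. -/
def unitCell (n : ℕ) : Set (Fin n → ℝ) := Set.univ.pi fun _ => Set.Ioo (0 : ℝ) 1

/-- Frobenius norm squared of a matrix. -/
def frobSq {n : ℕ} (M : Matrix (Fin n) (Fin n) ℝ) : ℝ := ∑ i, ∑ j, (M i j) ^ 2

/-- Frobenius inner product of two matrices. -/
def frobInner {n : ℕ} (M N : Matrix (Fin n) (Fin n) ℝ) : ℝ := ∑ i, ∑ j, M i j * N i j

/-- Euclidean norm squared of a vector. -/
def euclSq {n : ℕ} (v : Fin n → ℝ) : ℝ := ∑ i, (v i) ^ 2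

/-- Euclidean dot product. -/
def dotc {n : ℕ} (v w : Fin n → ℝ) : ℝ := ∑ i, v i * w i

/-- `ℤⁿ`-periodicity of a function on `ℝⁿ`. -/
def IsPeriodic {n : ℕ} {α : Type*} (f : (Fin n → ℝ) → α) : Prop :=
  ∀ (x : Fin n → ℝ) (k : Fin n → ℤ), f (x + fun i => (k i : ℝ)) = f x

/-- Partial derivative in direction `i`. -/
def pd {n : ℕ} (f : (Fin n → ℝ) → ℝ) (i : Fin n) (x : Fin n → ℝ) : ℝ :=
  fderiv ℝ f x (Pi.single i 1)

/-- Gradient. -/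
def grad {n : ℕ} (f : (Fin n → ℝ) → ℝ) (x : Fin n → ℝ) : Fin n → ℝ := fun i => pd f i x

/-- Hessian matrix. -/
def hess {n : ℕ} (f : (Fin n → ℝ) → ℝ) (x : Fin n → ℝ) : Matrix (Fin n) (Fin n) ℝ :=
  Matrix.of fun i j => pd (pd f j) i x

/-- Laplacian. -/
def lap {n : ℕ} (f : (Fin n → ℝ) → ℝ) (x : Fin n → ℝ) : ℝ := ∑ i, pd (pd f i) i x

/-- Jacobian matrix of a vector field: `(jac w x) i j = ∂_j w_i (x)`. -/
def jac {n : ℕ} (w : (Fin n → ℝ) → Fin n → ℝ) (x : Fin n → ℝ) : Matrix (Fin n) (Fin n) ℝ :=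
  Matrix.of fun i j => pd (fun y => w y i) j x

/-- Divergence of a vector field. -/
def divg {n : ℕ} (w : (Fin n → ℝ) → Fin n → ℝ) (x : Fin n → ℝ) : ℝ :=
  ∑ i, pd (fun y => w y i) i x

/-- Setting B: symmetric-valued, measurable, `ℤⁿ`-periodic, essentially bounded coefficients,
uniform ellipticity, and the Cordes-type condition with constant `δ ∈ (n/(n+π²), 1]`. -/
structure SettingB {n : ℕ} (A : (Fin n → ℝ) → Matrix (Fin n) (Fin n) ℝ)
    (b : (Fin n → ℝ) → Fin n → ℝ) (lam Lam δ : ℝ) : Prop where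
  symm : ∀ x, (A x).IsSymm
  measA : ∀ i j, Measurable fun x => A x i j
  measb : ∀ i, Measurable fun x => b x i
  perA : IsPeriodic A
  perb : IsPeriodic b
  bddA : ∃ C : ℝ, ∀ᵐ x ∂(volume : Measure (Fin n → ℝ)), frobSq (A x) ≤ C
  bddb : ∃ C : ℝ, ∀ᵐ x ∂(volume : Measure (Fin n → ℝ)), euclSq (b x) ≤ C
  lam_pos : 0 < lam
  lam_le_Lam : lam ≤ Lam
  ellip : ∀ᵐ x ∂(volume : Measure (Fin n → ℝ)), ∀ ξ : Fin n → ℝ,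
    lam * euclSq ξ ≤ dotc ξ (Matrix.mulVec (A x) ξ) ∧
      dotc ξ (Matrix.mulVec (A x) ξ) ≤ Lam * euclSq ξ
  delta_mem : δ ∈ Set.Ioc ((n : ℝ) / ((n : ℝ) + Real.pi ^ 2)) 1
  cordes : ∀ᵐ x ∂(volume : Measure (Fin n → ℝ)),
    (frobSq (A x) + euclSq (b x)) / (Matrix.trace (A x)) ^ 2 ≤ 1 / ((n : ℝ) - 1 + δ)

/-- The renormalization function `γ = tr A / (|A|² + |b|²)`. -/
def gam {n : ℕ} (A : (Fin n → ℝ) → Matrix (Fin n) (Fin n) ℝ)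
    (b : (Fin n → ℝ) → Fin n → ℝ) (x : Fin n → ℝ) : ℝ :=
  Matrix.trace (A x) / (frobSq (A x) + euclSq (b x))

/-- The constant `κ = (δ − n/(n+π²))·(n+π²)/π²`. -/
def kappa (n : ℕ) (δ : ℝ) : ℝ :=
  (δ - (n : ℝ) / ((n : ℝ) + Real.pi ^ 2)) * (((n : ℝ) + Real.pi ^ 2) / Real.pi ^ 2)

/-- The invariant measure: measurable, `ℤⁿ`-periodic, square-integrable over `Y`,
with unit mass over `Y`, solving the stationary FPK equation in the very weak sense. -/
def IsInvariantMeasure {n : ℕ} (A : (Fin n → ℝ) → Matrix (Fin n) (Fin n) ℝ)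
    (b : (Fin n → ℝ) → Fin n → ℝ) (r : (Fin n → ℝ) → ℝ) : Prop :=
  Measurable r ∧ IsPeriodic r ∧
    IntegrableOn (fun x => (r x) ^ 2) (unitCell n) ∧
    (∫ x in unitCell n, r x) = 1 ∧
    ∀ φ : (Fin n → ℝ) → ℝ, ContDiff ℝ 2 φ → IsPeriodic φ →
      (∫ x in unitCell n,
        r x * (frobInner (A x) (hess φ x) + dotc (b x) (grad φ x))) = 0

/-- The bilinear form `B₂`. -/
def B2 {n : ℕ} (A : (Fin n → ℝ) → Matrix (Fin n) (Fin n) ℝ)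
    (b : (Fin n → ℝ) → Fin n → ℝ) (v w : (Fin n → ℝ) → Fin n → ℝ) : ℝ :=
  (∫ x in unitCell n,
    divg v x * (frobInner (gam A b x • A x) (jac w x) + dotc (gam A b x • b x) (w x)))
  + (1 / 2) * ∫ x in unitCell n,
      frobInner (jac v x - (jac v x).transpose) (jac w x - (jac w x).transpose)

/-- A strong `H²_per(Y)`-type corrector for the cell problem
`-A:D²χ - b·∇χ = b_j`: `χ ∈ L²_per(Y)` with zero mean over `Y`, admitting a weak
gradient `g` and a weak Hessian `H` (measurable, periodic, square-integrable over
`Y`, `H` symmetric-valued), such that `-A:H - b·g = b_j` a.e. -/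
def IsCorrector {n : ℕ} (A : (Fin n → ℝ) → Matrix (Fin n) (Fin n) ℝ)
    (b : (Fin n → ℝ) → Fin n → ℝ) (j : Fin n) (χ : (Fin n → ℝ) → ℝ) : Prop :=
  Measurable χ ∧ IsPeriodic χ ∧
    IntegrableOn (fun x => (χ x) ^ 2) (unitCell n) ∧
    (∫ x in unitCell n, χ x) = 0 ∧
    ∃ (g : (Fin n → ℝ) → Fin n → ℝ) (H : (Fin n → ℝ) → Matrix (Fin n) (Fin n) ℝ),
      (∀ i, Measurable fun x => g x i) ∧ (∀ i k, Measurable fun x => H x i k) ∧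
      IsPeriodic g ∧ IsPeriodic H ∧
      (∀ i, IntegrableOn (fun x => (g x i) ^ 2) (unitCell n)) ∧
      (∀ i k, IntegrableOn (fun x => (H x i k) ^ 2) (unitCell n)) ∧
      (∀ᵐ x ∂(volume : Measure (Fin n → ℝ)), (H x).IsSymm) ∧
      (∀ φ : (Fin n → ℝ) → ℝ, ContDiff ℝ (⊤ : ℕ∞) φ → HasCompactSupport φ →
        (∀ i, (∫ x : Fin n → ℝ, χ x * pd φ i x) = -∫ x : Fin n → ℝ, g x i * φ x) ∧
        (∀ i k, (∫ x : Fin n → ℝ, χ x * pd (pd φ k) i x)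
          = ∫ x : Fin n → ℝ, H x i k * φ x)) ∧
      (∀ᵐ x ∂(volume : Measure (Fin n → ℝ)),
        -(frobInner (A x) (H x)) - dotc (b x) (g x) = b x j)

open Complex Set Filter Topology
open scoped ENNReal ComplexConjugate InnerProductSpace

/-
With `γ = tr A / (|A|² + |b|²)`, the Cordes condition says that the coefficients `(γ A, γ b)` are
within distance `√(1 - δ)` of those of the Laplacian, `(1, 0)`. On mean-zero functions the Fourier
series gives `‖D² Δ⁻¹ f‖² + ‖∇ Δ⁻¹ f‖² ≤ (1 + 1 / (4π²)) ‖f‖²`, so `γ (A : D² + b · ∇) Δ⁻¹` agrees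
there with a perturbation of the identity by a contraction of `L²`. Dividing by `γ` yields a
bijection `T` of `L²` with `T f = (A : D² + b · ∇) Δ⁻¹ f` for mean-zero `f`. The invariant measure
`r` is orthogonal to the image under `T` of the hyperplane of mean-zero functions; since `T` is
bijective, that image is the whole of `r^⊥`. The centering condition puts `-b_j` into `r^⊥`, and the
corrector is `Δ⁻¹ f` for the unique mean-zero `f` with `T f = -b_j`. Conversely, comparing Fourier
coefficients identifies every corrector with some `Δ⁻¹ f`.
-/

section Operators

lemma exists_apply_eq_of_ker_le_ker {𝕜 V W : Type*} [Field 𝕜] [AddCommGroup V] [Module 𝕜 V]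
    [AddCommGroup W] [Module 𝕜 W] {T : V →ₗ[𝕜] W} (hT : Function.Surjective T)
    {ε : V →ₗ[𝕜] 𝕜} {ρ : W →ₗ[𝕜] 𝕜} (hρ : ρ ≠ 0)
    (hker : LinearMap.ker ε ≤ LinearMap.ker (ρ ∘ₗ T)) {w : W} (hw : ρ w = 0) :
    ∃ v, ε v = 0 ∧ T v = w := by
  obtain ⟨v, rfl⟩ := hT w
  by_contra! h
  have hv : ε v ≠ 0 := fun h0 => h v h0 rfl
  refine hρ (LinearMap.ext fun w => ?_)
  obtain ⟨u, rfl⟩ := hT w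
  have hu : u - (ε u / ε v) • v ∈ LinearMap.ker ε := by
    simp [div_mul_cancel₀ _ hv]
  simpa [hw] using hker hu

lemma bijective_one_add_of_norm_lt_one {𝕜 E : Type*} [NontriviallyNormedField 𝕜]
    [NormedAddCommGroup E] [NormedSpace 𝕜 E] [CompleteSpace E] {K : E →L[𝕜] E} (hK : ‖K‖ < 1) :
    Function.Bijective ⇑(1 + K) := by
  rw [← ContinuousLinearMap.isUnit_iff_bijective, ← sub_neg_eq_add]
  exact isUnit_one_sub_of_norm_lt_one (by rwa [norm_neg])

variable {ι 𝕜 E : Type*} [RCLike 𝕜] [NormedAddCommGroup E] [InnerProductSpace 𝕜 E]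

lemma hasSum_norm_repr_sq (e : HilbertBasis ι 𝕜 E) (f : E) :
    HasSum (fun i => ‖e.repr f i‖ ^ 2) (‖f‖ ^ 2) := by
  simpa using lp.hasSum_norm (by simp) (e.repr f)

/-- The operator acting diagonally in a Hilbert basis, with a given bounded symbol. -/
def diagonalCLM (e : HilbertBasis ι 𝕜 E) {m : ι → 𝕜} {C : ℝ} (hC : 0 ≤ C)
    (hm : ∀ i, ‖m i‖ ≤ C) : E →L[𝕜] E :=
  e.repr.symm.toContinuousLinearEquiv.toContinuousLinearMap ∘L
    lp.mapCLM 2 (fun i => m i • ContinuousLinearMap.id 𝕜 𝕜) hC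
      (fun i => (norm_smul_le _ _).trans (by simpa using hm i)) ∘L
    e.repr.toContinuousLinearEquiv.toContinuousLinearMap

lemma repr_diagonalCLM (e : HilbertBasis ι 𝕜 E) {m : ι → 𝕜} {C : ℝ} (hC : 0 ≤ C)
    (hm : ∀ i, ‖m i‖ ≤ C) (f : E) (i : ι) :
    e.repr (diagonalCLM e hC hm f) i = m i * e.repr f i := by
  simp [diagonalCLM]

lemma diagonalCLM_basis (e : HilbertBasis ι 𝕜 E) {m : ι → 𝕜} {C : ℝ} (hC : 0 ≤ C)
    (hm : ∀ i, ‖m i‖ ≤ C) (i : ι) : diagonalCLM e hC hm (e i) = m i • e i := by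
  classical
  refine e.repr.injective (lp.ext (funext fun j => ?_))
  rw [repr_diagonalCLM, map_smul, lp.coeFn_smul, Pi.smul_apply, smul_eq_mul]
  rcases eq_or_ne j i with rfl | hj
  · rfl
  · rw [e.repr_self, lp.single_apply_ne _ _ _ hj, mul_zero, mul_zero]

end Operators

section LpOperators

variable {α ι 𝕜 E : Type*} [MeasurableSpace α] {μ : Measure α} [RCLike 𝕜]
  [NormedAddCommGroup E] [NormedSpace 𝕜 E]

/-- Multiplication by an essentially bounded function on `L²`. -/
def mulCLM {c : α → 𝕜} (hc : MemLp c ∞ μ) : Lp 𝕜 2 μ →L[𝕜] Lp 𝕜 2 μ :=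
  (ContinuousLinearMap.mul 𝕜 𝕜).holderL μ ∞ 2 2 (hc.toLp c)

lemma coeFn_mulCLM {c : α → 𝕜} (hc : MemLp c ∞ μ) (f : Lp 𝕜 2 μ) :
    mulCLM hc f =ᵐ[μ] fun x => c x * f x := by
  filter_upwards [(ContinuousLinearMap.mul 𝕜 𝕜).coeFn_holder (hc.toLp c) f (r := 2),
    hc.coeFn_toLp] with x hx hcx
  rw [← hcx]
  exact hx

lemma bijective_mulCLM {c d : α → 𝕜} (hc : MemLp c ∞ μ) (hd : MemLp d ∞ μ)
    (hcd : ∀ᵐ x ∂μ, c x * d x = 1) : Function.Bijective (mulCLM hc) := by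
  have hinv : ∀ {c d : α → 𝕜} (hc : MemLp c ∞ μ) (hd : MemLp d ∞ μ),
      (∀ᵐ x ∂μ, c x * d x = 1) → Function.LeftInverse (mulCLM hc) (mulCLM hd) := by
    intro c d hc hd hcd f
    refine Lp.ext ?_
    filter_upwards [coeFn_mulCLM hc (mulCLM hd f), coeFn_mulCLM hd f, hcd] with x h₁ h₂ h
    rw [h₁, h₂, ← mul_assoc, h, one_mul]
  exact Function.bijective_iff_has_inverse.mpr
    ⟨mulCLM hd, hinv hd hc (by simpa only [mul_comm] using hcd), hinv hc hd hcd⟩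

lemma norm_sq_eq_integral (f : Lp 𝕜 2 μ) : ‖f‖ ^ 2 = ∫ x, ‖f x‖ ^ 2 ∂μ := by
  have h := L2.inner_def (𝕜 := 𝕜) f f
  simp only [inner_self_eq_norm_sq_to_K] at h
  exact_mod_cast h

lemma integrable_norm_sq (f : Lp 𝕜 2 μ) : Integrable (fun x => ‖f x‖ ^ 2) μ :=
  (memLp_two_iff_integrable_sq_norm (Lp.memLp f).1).1 (Lp.memLp f)

lemma norm_sum_mul_sq_le {R : Type*} [SeminormedRing R] (s : Finset ι) (c w : ι → R) :
    ‖∑ i ∈ s, c i * w i‖ ^ 2 ≤ (∑ i ∈ s, ‖c i‖ ^ 2) * ∑ i ∈ s, ‖w i‖ ^ 2 :=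
  calc ‖∑ i ∈ s, c i * w i‖ ^ 2 ≤ (∑ i ∈ s, ‖c i‖ * ‖w i‖) ^ 2 := by
        gcongr
        exact (norm_sum_le _ _).trans (Finset.sum_le_sum fun i _ => norm_mul_le _ _)
    _ ≤ _ := Finset.sum_mul_sq_le_sq_mul_sq _ _ _

variable [Fintype ι]

/-- The operator `f ↦ ∑ᵢ cᵢ Tᵢ f` with essentially bounded coefficients `cᵢ`. -/
def combCLM {c : ι → α → 𝕜} (hc : ∀ i, MemLp (c i) ∞ μ) (T : ι → E →L[𝕜] Lp 𝕜 2 μ) :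
    E →L[𝕜] Lp 𝕜 2 μ :=
  ∑ i, mulCLM (hc i) ∘L T i

lemma coeFn_combCLM {c : ι → α → 𝕜} (hc : ∀ i, MemLp (c i) ∞ μ) (T : ι → E →L[𝕜] Lp 𝕜 2 μ)
    (f : E) : combCLM hc T f =ᵐ[μ] fun x => ∑ i, c i x * T i f x := by
  have happ : combCLM hc T f = ∑ i, mulCLM (hc i) (T i f) := by simp [combCLM]
  rw [happ]
  filter_upwards [Lp.coeFn_finsetSum Finset.univ fun i => mulCLM (hc i) (T i f),
    ae_all_iff.2 fun i => coeFn_mulCLM (hc i) (T i f)] with x hsum hmul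
  simp only [hsum, Finset.sum_apply, hmul]

lemma norm_combCLM_le {c : ι → α → 𝕜} (hc : ∀ i, MemLp (c i) ∞ μ) {T : ι → E →L[𝕜] Lp 𝕜 2 μ}
    {q C : ℝ} (hq : 0 ≤ q) (hcq : ∀ᵐ x ∂μ, ∑ i, ‖c i x‖ ^ 2 ≤ q)
    (hT : ∀ f, ∑ i, ‖T i f‖ ^ 2 ≤ C * ‖f‖ ^ 2) : ‖combCLM hc T‖ ≤ √(q * C) := by
  refine ContinuousLinearMap.opNorm_le_bound _ (Real.sqrt_nonneg _) fun f => ?_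
  have hint : Integrable (fun x => ∑ i, ‖T i f x‖ ^ 2) μ :=
    integrable_finsetSum _ fun i _ => integrable_norm_sq (T i f)
  have hsq : ‖combCLM hc T f‖ ^ 2 ≤ q * C * ‖f‖ ^ 2 :=
    calc ‖combCLM hc T f‖ ^ 2 = ∫ x, ‖combCLM hc T f x‖ ^ 2 ∂μ := norm_sq_eq_integral _
      _ ≤ ∫ x, q * ∑ i, ‖T i f x‖ ^ 2 ∂μ := by
        refine integral_mono_ae (integrable_norm_sq _) (hint.const_mul q) ?_
        filter_upwards [coeFn_combCLM hc T f, hcq] with x hx hq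
        rw [hx]
        exact (norm_sum_mul_sq_le _ _ _).trans (by gcongr)
      _ = q * ∑ i, ‖T i f‖ ^ 2 := by
        simp only [norm_sq_eq_integral]
        rw [integral_const_mul, integral_finsetSum _ fun i _ => integrable_norm_sq (T i f)]
      _ ≤ q * C * ‖f‖ ^ 2 := by
        rw [mul_assoc]
        exact mul_le_mul_of_nonneg_left (hT f) hq
  rw [← Real.sqrt_sq (norm_nonneg f), ← Real.sqrt_mul' _ (sq_nonneg _)]
  exact Real.le_sqrt_of_sq_le hsq

end LpOperators

section Cordes

/-- Index set for the second- and first-order partial derivatives on `ℝⁿ`: `Sum.inl (i, j)`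
stands for `∂ᵢ∂ⱼ` and `Sum.inr i` for `∂ᵢ`. -/
abbrev JetIndex (n : ℕ) := (Fin n × Fin n) ⊕ Fin n

/-- The pair of a matrix and a vector, as a single vector indexed by `JetIndex n`. It turns
`A : H + b · g` into one inner product. -/
def jet {n : ℕ} {R : Type*} (M : Matrix (Fin n) (Fin n) R) (v : Fin n → R) : JetIndex n → R :=
  Sum.elim (fun p => M p.1 p.2) v

variable {n : ℕ}

lemma frobInner_add_dotc (M N : Matrix (Fin n) (Fin n) ℝ) (v w : Fin n → ℝ) :
    frobInner M N + dotc v w = ∑ ι, jet M v ι * jet N w ι := by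
  simp [frobInner, dotc, jet, Fintype.sum_prod_type]

lemma frobSq_add_euclSq (M : Matrix (Fin n) (Fin n) ℝ) (v : Fin n → ℝ) :
    frobSq M + euclSq v = ∑ ι, jet M v ι ^ 2 := by
  simp [frobSq, euclSq, jet, Fintype.sum_prod_type]

lemma trace_eq_sum_jet (M : Matrix (Fin n) (Fin n) ℝ) (v : Fin n → ℝ) :
    M.trace = ∑ ι, jet 1 0 ι * jet M v ι := by
  simp [jet, Matrix.trace, Fintype.sum_prod_type, Matrix.one_apply]

lemma sum_jet_one_sq (n : ℕ) : ∑ ι : JetIndex n, (jet 1 0 ι : ℝ) ^ 2 = n := by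
  rw [Fintype.sum_sum_type, Fintype.sum_prod_type]
  simp [jet, Matrix.one_apply]

lemma trace_sq_le (M : Matrix (Fin n) (Fin n) ℝ) (v : Fin n → ℝ) :
    M.trace ^ 2 ≤ n * (frobSq M + euclSq v) := by
  rw [trace_eq_sum_jet M v, frobSq_add_euclSq, ← sum_jet_one_sq n]
  exact Finset.sum_mul_sq_le_sq_mul_sq _ _ _

lemma sum_orthogonal_residual_sq {ι : Type*} [Fintype ι] (a e : ι → ℝ) (ha : ∑ i, a i ^ 2 ≠ 0) :
    ∑ i, ((∑ j, e j * a j) / (∑ j, a j ^ 2) * a i - e i) ^ 2 =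
      ∑ i, e i ^ 2 - (∑ i, e i * a i) ^ 2 / ∑ i, a i ^ 2 := by
  set s := ∑ j, e j * a j
  set N := ∑ j, a j ^ 2
  calc ∑ i, (s / N * a i - e i) ^ 2
      = ∑ i, ((s / N) ^ 2 * a i ^ 2 - 2 * (s / N) * (e i * a i) + e i ^ 2) :=
        Finset.sum_congr rfl fun i _ => by ring
    _ = (s / N) ^ 2 * N - 2 * (s / N) * s + ∑ i, e i ^ 2 := by
        rw [Finset.sum_add_distrib, Finset.sum_sub_distrib, ← Finset.mul_sum, ← Finset.mul_sum]
    _ = ∑ i, e i ^ 2 - s ^ 2 / N := by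
        field_simp
        ring

/-- Coefficients of a nondivergence-form operator `A : D² + b · ∇` for which the cell problem is
solvable: they are measurable, periodic, of bounded and uniformly positive trace, and satisfy a
Cordes condition with a constant `δ` above the threshold `1 / (1 + 4π²)`. -/
structure IsCordesPair (A : (Fin n → ℝ) → Matrix (Fin n) (Fin n) ℝ)
    (b : (Fin n → ℝ) → Fin n → ℝ) (δ : ℝ) : Prop where
  measA : ∀ i j, Measurable fun x => A x i j
  measb : ∀ i, Measurable fun x => b x i
  perA : IsPeriodic A
  perb : IsPeriodic b
  trace_mem : ∃ c C : ℝ, 0 < c ∧ ∀ᵐ x : Fin n → ℝ, (A x).trace ∈ Icc c C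
  cordes : ∀ᵐ x : Fin n → ℝ,
    ((n : ℝ) - 1 + δ) * (frobSq (A x) + euclSq (b x)) ≤ (A x).trace ^ 2
  lt_delta : 1 / (1 + 4 * Real.pi ^ 2) < δ

variable {A : (Fin n → ℝ) → Matrix (Fin n) (Fin n) ℝ} {b : (Fin n → ℝ) → Fin n → ℝ}

namespace SettingB

variable {lam Lam δ : ℝ}

lemma ae_diag_mem_Icc (h : SettingB A b lam Lam δ) : ∀ᵐ x, ∀ i, A x i i ∈ Icc lam Lam := by
  filter_upwards [h.ellip] with x hx i
  simpa [euclSq, dotc, Pi.single_apply, Matrix.mulVec_single] using hx (Pi.single i 1)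

lemma ae_trace_mem_Icc (h : SettingB A b lam Lam δ) :
    ∀ᵐ x, (A x).trace ∈ Icc (n * lam) (n * Lam) := by
  filter_upwards [h.ae_diag_mem_Icc] with x hx
  have hl := Finset.card_nsmul_le_sum Finset.univ (fun i => A x i i) lam fun i _ => (hx i).1
  have hu := Finset.sum_le_card_nsmul Finset.univ (fun i => A x i i) Lam fun i _ => (hx i).2
  rw [Finset.card_univ, Fintype.card_fin, nsmul_eq_mul] at hl hu
  exact ⟨hl, hu⟩

lemma isCordesPair (hn : 1 ≤ n) (h : SettingB A b lam Lam δ) : IsCordesPair A b δ := by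
  have hn' : (1 : ℝ) ≤ n := by exact_mod_cast hn
  have hlam := h.lam_pos
  have hδ : (n : ℝ) / (n + Real.pi ^ 2) < δ := h.delta_mem.1
  have hδ_pos : 0 < δ := lt_of_le_of_lt (by positivity) hδ
  refine ⟨h.measA, h.measb, h.perA, h.perb, ⟨n * lam, n * Lam, by positivity,
    h.ae_trace_mem_Icc⟩, ?_, lt_of_le_of_lt ?_ hδ⟩
  · filter_upwards [h.cordes, h.ae_trace_mem_Icc] with x hx htr
    have htr_pos : 0 < (A x).trace := lt_of_lt_of_le (by positivity) htr.1
    rw [div_le_div_iff₀ (by positivity) (by linarith), one_mul] at hx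
    linarith
  · rw [div_le_div_iff₀ (by positivity) (by positivity)]
    nlinarith [sq_nonneg Real.pi]

end SettingB

namespace IsCordesPair

variable {δ : ℝ}

lemma delta_pos (h : IsCordesPair A b δ) : 0 < δ :=
  lt_trans (by positivity) h.lt_delta

lemma ae_trace_pos (h : IsCordesPair A b δ) : ∀ᵐ x, 0 < (A x).trace := by
  obtain ⟨c, C, hc, htr⟩ := h.trace_mem
  exact htr.mono fun x hx => hc.trans_le hx.1

lemma one_le_dim (h : IsCordesPair A b δ) : (1 : ℝ) ≤ n := by
  obtain ⟨x, hx⟩ := h.ae_trace_pos.exists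
  rcases n.eq_zero_or_pos with rfl | hn
  · simp at hx
  · exact_mod_cast hn

lemma ae_denom_pos (h : IsCordesPair A b δ) : ∀ᵐ x, 0 < frobSq (A x) + euclSq (b x) := by
  filter_upwards [h.ae_trace_pos] with x hx
  exact pos_of_mul_pos_right ((pow_pos hx 2).trans_le (trace_sq_le _ _)) n.cast_nonneg

lemma ae_gam_pos (h : IsCordesPair A b δ) : ∀ᵐ x, 0 < gam A b x := by
  filter_upwards [h.ae_trace_pos, h.ae_denom_pos] with x htr hden
  exact div_pos htr hden

lemma measurable_jet (h : IsCordesPair A b δ) (ι : JetIndex n) :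
    Measurable fun x => jet (A x) (b x) ι := by
  rcases ι with ⟨i, j⟩ | i
  · exact h.measA i j
  · exact h.measb i

lemma measurable_gam (h : IsCordesPair A b δ) : Measurable (gam A b) := by
  unfold gam
  simp only [frobSq_add_euclSq]
  exact (Finset.measurable_sum _ fun i _ => h.measA i i).div
    (Finset.measurable_sum _ fun ι _ => (h.measurable_jet ι).pow_const 2)

lemma memLp_gam (h : IsCordesPair A b δ) : MemLp (gam A b) ∞ volume := by
  obtain ⟨c, C, hc, htr⟩ := h.trace_mem
  refine memLp_top_of_bound h.measurable_gam.aestronglyMeasurable (n / c) ?_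
  filter_upwards [htr, h.ae_denom_pos, h.ae_gam_pos] with x htr hden hgam
  rw [Real.norm_of_nonneg hgam.le, gam, div_le_div_iff₀ hden hc]
  calc (A x).trace * c ≤ (A x).trace ^ 2 := by
        rw [sq]
        exact mul_le_mul_of_nonneg_left htr.1 (hc.le.trans htr.1)
    _ ≤ n * (frobSq (A x) + euclSq (b x)) := trace_sq_le _ _

lemma memLp_inv_gam (h : IsCordesPair A b δ) : MemLp (fun x => (gam A b x)⁻¹) ∞ volume := by
  obtain ⟨c, C, hc, htr⟩ := h.trace_mem
  have hκ : 0 < (n : ℝ) - 1 + δ := by linarith [h.one_le_dim, h.delta_pos]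
  refine memLp_top_of_bound h.measurable_gam.inv.aestronglyMeasurable (C / (n - 1 + δ)) ?_
  filter_upwards [htr, h.cordes, h.ae_gam_pos] with x htr hcordes hgam
  have htr_pos : 0 < (A x).trace := hc.trans_le htr.1
  rw [Real.norm_of_nonneg (inv_nonneg.2 hgam.le), gam, inv_div, div_le_div_iff₀ htr_pos hκ]
  nlinarith [htr.2]

lemma memLp_jet (h : IsCordesPair A b δ) (ι : JetIndex n) :
    MemLp (fun x => jet (A x) (b x) ι) ∞ volume := by
  obtain ⟨c, C, hc, htr⟩ := h.trace_mem
  have hκ : 0 < (n : ℝ) - 1 + δ := by linarith [h.one_le_dim, h.delta_pos]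
  refine memLp_top_of_bound (h.measurable_jet ι).aestronglyMeasurable √(C ^ 2 / (n - 1 + δ)) ?_
  filter_upwards [htr, h.cordes] with x htr hcordes
  refine Real.le_sqrt_of_sq_le ?_
  rw [Real.norm_eq_abs, sq_abs, le_div_iff₀ hκ, mul_comm]
  calc ((n : ℝ) - 1 + δ) * jet (A x) (b x) ι ^ 2
      ≤ (n - 1 + δ) * (frobSq (A x) + euclSq (b x)) := by
        rw [frobSq_add_euclSq]
        gcongr
        exact Finset.single_le_sum (f := fun ι => jet (A x) (b x) ι ^ 2)
          (fun _ _ => sq_nonneg _) (Finset.mem_univ ι)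
    _ ≤ (A x).trace ^ 2 := hcordes
    _ ≤ C ^ 2 := pow_le_pow_left₀ (hc.le.trans htr.1) htr.2 2

lemma ae_sum_gam_mul_jet_sub_sq_le (h : IsCordesPair A b δ) :
    ∀ᵐ x, ∑ ι, (gam A b x * jet (A x) (b x) ι - jet 1 0 ι) ^ 2 ≤ 1 - δ := by
  filter_upwards [h.cordes, h.ae_denom_pos] with x hcordes hden
  rw [frobSq_add_euclSq] at hden
  rw [gam, trace_eq_sum_jet (A x) (b x), frobSq_add_euclSq,
    sum_orthogonal_residual_sq _ _ hden.ne', sum_jet_one_sq]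
  rw [trace_eq_sum_jet (A x) (b x), frobSq_add_euclSq, ← le_div_iff₀ hden] at hcordes
  linarith

lemma delta_le_one (h : IsCordesPair A b δ) : δ ≤ 1 := by
  obtain ⟨x, hx⟩ := h.ae_sum_gam_mul_jet_sub_sq_le.exists
  linarith [Finset.sum_nonneg fun ι (_ : ι ∈ Finset.univ) =>
    sq_nonneg (gam A b x * jet (A x) (b x) ι - jet 1 0 ι)]

lemma sqrt_contraction_lt_one (h : IsCordesPair A b δ) :
    √((1 - δ) * (1 + 1 / (4 * Real.pi ^ 2))) < 1 := by
  rw [Real.sqrt_lt' one_pos, one_pow]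
  calc (1 - δ) * (1 + 1 / (4 * Real.pi ^ 2))
      < (1 - 1 / (1 + 4 * Real.pi ^ 2)) * (1 + 1 / (4 * Real.pi ^ 2)) := by
        gcongr
        exact h.lt_delta
    _ = 1 := by field_simp; ring

end IsCordesPair

end Cordes

section FourierBasis

variable {n : ℕ}

/-- Lebesgue measure on the unit cell. -/
abbrev cellMeasure (n : ℕ) : Measure (Fin n → ℝ) := volume.restrict (unitCell n)

/-- Complex-valued square-integrable functions on the unit cell. -/
abbrev L2 (n : ℕ) := Lp ℂ 2 (cellMeasure n)

lemma measurableSet_unitCell (n : ℕ) : MeasurableSet (unitCell n) :=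
  MeasurableSet.univ_pi fun _ => measurableSet_Ioo

lemma unitCell_ae_eq_Ico (n : ℕ) :
    unitCell n =ᵐ[volume] (univ.pi fun _ : Fin n => Ico (0 : ℝ) 1) :=
  Measure.univ_pi_Ioo_ae_eq_Icc.trans Measure.univ_pi_Ico_ae_eq_Icc.symm

lemma unitCell_ae_eq_Ioc (n : ℕ) :
    unitCell n =ᵐ[volume] (univ.pi fun _ : Fin n => Ioc (0 : ℝ) 1) :=
  Measure.univ_pi_Ioo_ae_eq_Icc.trans Measure.univ_pi_Ioc_ae_eq_Icc.symm

instance isProbabilityMeasure_cellMeasure (n : ℕ) : IsProbabilityMeasure (cellMeasure n) :=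
  ⟨by simp [unitCell, Real.volume_pi_Ioo]⟩

/-- The complex exponential `x ↦ exp (2πi k · x)` on `ℝⁿ`. -/
def expo (k : Fin n → ℤ) (x : Fin n → ℝ) : ℂ :=
  cexp (2 * Real.pi * I * ∑ i, (k i : ℂ) * (x i : ℂ))

lemma mFourier_coe_eq_expo (k : Fin n → ℤ) (x : Fin n → ℝ) :
    UnitAddTorus.mFourier k (fun i => (x i : UnitAddCircle)) = expo k x := by
  simp only [UnitAddTorus.mFourier, ContinuousMap.coe_mk, fourier_coe_apply, expo,
    ← Complex.exp_sum, Finset.mul_sum]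
  congr 1
  refine Finset.sum_congr rfl fun i _ => ?_
  simp only [ofReal_one, div_one]
  ring

lemma expo_zero (x : Fin n → ℝ) : expo 0 x = 1 := by simp [expo]

lemma norm_expo (k : Fin n → ℤ) (x : Fin n → ℝ) : ‖expo k x‖ = 1 := by
  rw [expo, show 2 * Real.pi * I * ∑ i, (k i : ℂ) * (x i : ℂ) =
    ((2 * Real.pi * ∑ i, (k i : ℝ) * x i : ℝ) : ℂ) * I by push_cast; ring,
    Complex.norm_exp_ofReal_mul_I]

lemma conj_expo (k : Fin n → ℤ) (x : Fin n → ℝ) : conj (expo k x) = expo (-k) x := by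
  simp [expo, ← Complex.exp_conj, Complex.conj_ofNat]

lemma contDiff_expo (k : Fin n → ℤ) {m : WithTop ℕ∞} :
    ContDiff ℝ m (expo k : (Fin n → ℝ) → ℂ) :=
  ContDiff.cexp <| contDiff_const.mul <| ContDiff.sum fun i _ =>
    contDiff_const.mul <| Complex.ofRealCLM.contDiff.comp (contDiff_apply ℝ ℝ i)

lemma isPeriodic_expo (k : Fin n → ℤ) : IsPeriodic (expo k : (Fin n → ℝ) → ℂ) := by
  intro x m
  simp [← mFourier_coe_eq_expo]

lemma memLp_expo (k : Fin n → ℤ) (p : ℝ≥0∞) : MemLp (expo k) p (cellMeasure n) :=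
  MemLp.of_bound (contDiff_expo k (m := 0)).continuous.aestronglyMeasurable 1
    (Eventually.of_forall fun x => (norm_expo k x).le)

/-- The exponentials as elements of `L²` of the unit cell. -/
def expoLp (k : Fin n → ℤ) : L2 n := (memLp_expo k 2).toLp (expo k)

lemma coeFn_expoLp (k : Fin n → ℤ) : expoLp k =ᵐ[cellMeasure n] expo k :=
  (memLp_expo k 2).coeFn_toLp

section Torus

/-- The Haar probability measure on the circle, which Mathlib's Fourier theory on the torus
uses. -/
@[reducible]
def measureSpaceUnitAddCircleHaar : MeasureSpace UnitAddCircle :=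
  ⟨AddCircle.haarAddCircle⟩

attribute [local instance] measureSpaceUnitAddCircleHaar

/-- The measurable section of `ℝⁿ → ℝⁿ / ℤⁿ` with values in `(0,1]ⁿ`. -/
def torusSection (n : ℕ) (y : UnitAddTorus (Fin n)) : Fin n → ℝ :=
  (UnitAddTorus.measurableEquivPiIoc (0 : Fin n → ℝ) y).1

lemma coe_torusSection (y : UnitAddTorus (Fin n)) :
    (fun i => (torusSection n y i : UnitAddCircle)) = y :=
  (UnitAddTorus.measurableEquivPiIoc (0 : Fin n → ℝ)).symm_apply_apply y

lemma measurePreserving_torusSection (n : ℕ) :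
    MeasurePreserving (torusSection n) (volume : Measure (UnitAddTorus (Fin n)))
      (cellMeasure n) := by
  have hIoc : {x : Fin n → ℝ | ∀ i, x i ∈ Ioc ((0 : Fin n → ℝ) i) ((0 : Fin n → ℝ) i + 1)} =
      univ.pi fun _ => Ioc (0 : ℝ) 1 := by ext; simp
  have hmeas := MeasurableSet.univ_pi fun _ : Fin n => measurableSet_Ioc (a := (0 : ℝ)) (b := 1)
  rw [← hIoc] at hmeas
  rw [cellMeasure, Measure.restrict_congr_set (unitCell_ae_eq_Ioc n), ← hIoc]
  exact (measurePreserving_subtype_coe hmeas).comp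
    (UnitAddTorus.measurePreserving_equivPiIoc (0 : Fin n → ℝ))

/-- Pulling back to the torus, as an isometry. -/
def pullbackTorus (n : ℕ) : L2 n →ₗᵢ[ℂ] Lp ℂ 2 (volume : Measure (UnitAddTorus (Fin n))) :=
  Lp.compMeasurePreservingₗᵢ ℂ (torusSection n) (measurePreserving_torusSection n)

lemma pullbackTorus_expoLp (k : Fin n → ℤ) :
    pullbackTorus n (expoLp k) = UnitAddTorus.mFourierLp 2 k := by
  refine Lp.ext ?_
  have hsec := measurePreserving_torusSection n
  filter_upwards [Lp.coeFn_compMeasurePreserving (expoLp k) hsec,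
    hsec.quasiMeasurePreserving.ae (coeFn_expoLp k), UnitAddTorus.coeFn_mFourierLp 2 k]
    with y hpull hexpo hfourier
  rw [hfourier, ← coe_torusSection y, mFourier_coe_eq_expo, ← hexpo, coe_torusSection y]
  exact hpull

lemma orthonormal_expoLp (n : ℕ) : Orthonormal ℂ (expoLp : (Fin n → ℤ) → L2 n) := by
  rw [← (pullbackTorus n).orthonormal_comp_iff,
    show pullbackTorus n ∘ expoLp = UnitAddTorus.mFourierLp 2 from funext pullbackTorus_expoLp]
  exact UnitAddTorus.orthonormal_mFourier

lemma eq_zero_of_forall_inner_expoLp_eq_zero {f : L2 n} (hf : ∀ k, ⟪expoLp k, f⟫_ℂ = 0) :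
    f = 0 := by
  rw [← map_eq_zero_iff _ (pullbackTorus n).injective]
  refine UnitAddTorus.mFourierBasis.repr.injective (lp.ext (funext fun k => ?_))
  rw [HilbertBasis.repr_apply_apply, UnitAddTorus.coe_mFourierBasis, ← pullbackTorus_expoLp,
    LinearIsometry.inner_map_map, hf, map_zero]
  rfl

end Torus

/-- The Fourier basis of `L²` of the unit cell. -/
def cellBasis (n : ℕ) : HilbertBasis (Fin n → ℤ) ℂ (L2 n) :=
  HilbertBasis.mkOfOrthogonalEqBot (orthonormal_expoLp n) <|
    (Submodule.eq_bot_iff _).2 fun _ hf => eq_zero_of_forall_inner_expoLp_eq_zero fun k =>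
      (Submodule.mem_orthogonal _ _).1 hf _ (Submodule.subset_span ⟨k, rfl⟩)

/-- The `k`-th Fourier coefficient of a square-integrable function on the unit cell. -/
def coef (f : L2 n) (k : Fin n → ℤ) : ℂ := (cellBasis n).repr f k

lemma coe_cellBasis (n : ℕ) : ⇑(cellBasis n) = expoLp :=
  HilbertBasis.coe_mkOfOrthogonalEqBot _ _

lemma inner_expoLp (k : Fin n → ℤ) (f : L2 n) : ⟪expoLp k, f⟫_ℂ = coef f k := by
  rw [coef, HilbertBasis.repr_apply_apply, coe_cellBasis]

lemma ext_coef {f g : L2 n} (h : ∀ k, coef f k = coef g k) : f = g :=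
  (cellBasis n).repr.injective (lp.ext (funext h))

lemma coef_toLp {f : (Fin n → ℝ) → ℂ} (hf : MemLp f 2 (cellMeasure n)) (k : Fin n → ℤ) :
    coef (hf.toLp f) k = ∫ x in unitCell n, f x * expo (-k) x := by
  rw [← inner_expoLp, L2.inner_def]
  refine integral_congr_ae ?_
  filter_upwards [coeFn_expoLp k, hf.coeFn_toLp] with x hexpo hfx
  rw [hexpo, hfx, RCLike.inner_apply, conj_expo]

lemma dense_span_expoLp (n : ℕ) :
    Dense (Submodule.span ℂ (range (expoLp : (Fin n → ℤ) → L2 n)) : Set (L2 n)) := by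
  rw [Submodule.dense_iff_topologicalClosure_eq_top]
  simpa only [coe_cellBasis] using (cellBasis n).dense_span

end FourierBasis

section InverseLaplacian

variable {n : ℕ}

/-- Fourier symbol of the partial derivative `∂ᵢ`. -/
def derivSymb (i : Fin n) (k : Fin n → ℤ) : ℂ := 2 * Real.pi * I * k i

/-- Fourier symbols of the first- and second-order partial derivatives. -/
def jetSymb (k : Fin n → ℤ) : JetIndex n → ℂ :=
  jet (Matrix.of fun i j => derivSymb i k * derivSymb j k) fun i => derivSymb i k

/-- Fourier symbol of the inverse of the Laplacian on mean-zero functions. Since `0⁻¹ = 0`, it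
vanishes at the zero frequency. -/
def invLapSymb (k : Fin n → ℤ) : ℂ := (∑ i, derivSymb i k ^ 2)⁻¹

lemma derivSymb_sq (i : Fin n) (k : Fin n → ℤ) :
    derivSymb i k ^ 2 = -((‖derivSymb i k‖ ^ 2 : ℝ) : ℂ) := by
  have h : derivSymb i k = ((2 * Real.pi * k i : ℝ) : ℂ) * I := by
    rw [derivSymb]
    push_cast
    ring
  rw [h, norm_mul, norm_I, mul_one, norm_real, Real.norm_eq_abs, sq_abs, mul_pow, I_sq]
  push_cast
  ring

lemma norm_invLapSymb (k : Fin n → ℤ) : ‖invLapSymb k‖ = (∑ i, ‖derivSymb i k‖ ^ 2)⁻¹ := by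
  simp only [invLapSymb, derivSymb_sq, Finset.sum_neg_distrib, ← ofReal_sum, norm_inv, norm_neg,
    norm_real]
  rw [Real.norm_of_nonneg (Finset.sum_nonneg fun _ _ => sq_nonneg _)]

lemma le_sum_norm_derivSymb_sq {k : Fin n → ℤ} (hk : k ≠ 0) :
    4 * Real.pi ^ 2 ≤ ∑ i, ‖derivSymb i k‖ ^ 2 := by
  obtain ⟨i, hi⟩ := Function.ne_iff.1 hk
  have hki : (1 : ℝ) ≤ (k i : ℝ) ^ 2 := by exact_mod_cast sq_pos_of_ne_zero hi
  calc 4 * Real.pi ^ 2 ≤ 4 * Real.pi ^ 2 * (k i : ℝ) ^ 2 :=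
        le_mul_of_one_le_right (by positivity) hki
    _ = ‖derivSymb i k‖ ^ 2 := by
        simp only [derivSymb, norm_mul, norm_I, norm_ofNat, norm_real, norm_intCast, mul_pow,
          Real.norm_eq_abs, sq_abs, mul_one]
        norm_num
    _ ≤ _ := Finset.single_le_sum (f := fun i => ‖derivSymb i k‖ ^ 2)
        (fun _ _ => sq_nonneg _) (Finset.mem_univ i)

lemma invLapSymb_zero : invLapSymb (0 : Fin n → ℤ) = 0 := by simp [invLapSymb, derivSymb]

lemma norm_invLapSymb_le_one (k : Fin n → ℤ) : ‖invLapSymb k‖ ≤ 1 := by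
  rcases eq_or_ne k 0 with rfl | hk
  · simp [invLapSymb_zero]
  · rw [norm_invLapSymb]
    refine inv_le_one_of_one_le₀ (le_trans ?_ (le_sum_norm_derivSymb_sq hk))
    nlinarith [Real.pi_gt_three]

lemma sum_jetSymb_diag_mul_invLapSymb {k : Fin n → ℤ} (hk : k ≠ 0) :
    (∑ i, jetSymb k (Sum.inl (i, i))) * invLapSymb k = 1 := by
  have hne : ‖invLapSymb k‖ ≠ 0 := by
    rw [norm_invLapSymb]
    exact (inv_pos.2 (lt_of_lt_of_le (by positivity) (le_sum_norm_derivSymb_sq hk))).ne'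
  simp only [jetSymb, jet, Sum.elim_inl, Matrix.of_apply, ← sq]
  rw [← inv_inv (∑ i, derivSymb i k ^ 2)]
  exact inv_mul_cancel₀ (norm_ne_zero_iff.1 hne)

lemma sum_norm_jetSymb_sq (k : Fin n → ℤ) :
    ∑ ι, ‖jetSymb k ι‖ ^ 2 = (∑ i, ‖derivSymb i k‖ ^ 2) ^ 2 + ∑ i, ‖derivSymb i k‖ ^ 2 := by
  rw [Fintype.sum_sum_type, Fintype.sum_prod_type, sq (∑ i, _), Finset.sum_mul_sum]
  simp [jetSymb, jet, mul_pow]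

lemma sum_norm_jetSymb_mul_invLapSymb_sq_le (k : Fin n → ℤ) :
    ∑ ι, ‖jetSymb k ι * invLapSymb k‖ ^ 2 ≤ 1 + 1 / (4 * Real.pi ^ 2) := by
  rcases eq_or_ne k 0 with rfl | hk
  · simp only [invLapSymb_zero, mul_zero, norm_zero, sq, Finset.sum_const_zero]
    positivity
  · have hle := le_sum_norm_derivSymb_sq hk
    simp only [norm_mul, mul_pow, ← Finset.sum_mul, sum_norm_jetSymb_sq, norm_invLapSymb]
    set s := ∑ i, ‖derivSymb i k‖ ^ 2
    have hs : 0 < s := lt_of_lt_of_le (by positivity) hle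
    calc (s ^ 2 + s) * s⁻¹ ^ 2 = 1 + 1 / s := by field_simp
      _ ≤ 1 + 1 / (4 * Real.pi ^ 2) := by gcongr

lemma norm_jetSymb_mul_invLapSymb_le (ι : JetIndex n) (k : Fin n → ℤ) :
    ‖jetSymb k ι * invLapSymb k‖ ≤ √(1 + 1 / (4 * Real.pi ^ 2)) :=
  Real.le_sqrt_of_sq_le <|
    (Finset.single_le_sum (f := fun ι => ‖jetSymb k ι * invLapSymb k‖ ^ 2)
      (fun _ _ => sq_nonneg _) (Finset.mem_univ ι)).trans
      (sum_norm_jetSymb_mul_invLapSymb_sq_le k)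

/-- The inverse `Δ⁻¹` of the Laplacian on mean-zero periodic functions, extended by `0` to
constants. -/
def invLap (n : ℕ) : L2 n →L[ℂ] L2 n :=
  diagonalCLM (cellBasis n) zero_le_one norm_invLapSymb_le_one

/-- The first- and second-order partial derivatives of `Δ⁻¹`. -/
def jetInvLap (ι : JetIndex n) : L2 n →L[ℂ] L2 n :=
  diagonalCLM (cellBasis n) (Real.sqrt_nonneg _) (norm_jetSymb_mul_invLapSymb_le ι)

lemma coef_invLap (f : L2 n) (k : Fin n → ℤ) : coef (invLap n f) k = invLapSymb k * coef f k :=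
  repr_diagonalCLM _ _ _ _ _

lemma coef_jetInvLap (ι : JetIndex n) (f : L2 n) (k : Fin n → ℤ) :
    coef (jetInvLap ι f) k = jetSymb k ι * invLapSymb k * coef f k :=
  repr_diagonalCLM _ _ _ _ _

lemma jetInvLap_expoLp (ι : JetIndex n) (k : Fin n → ℤ) :
    jetInvLap ι (expoLp k) = (jetSymb k ι * invLapSymb k) • expoLp k := by
  rw [← coe_cellBasis]
  exact diagonalCLM_basis _ _ _ _

lemma sum_norm_jetInvLap_sq_le (f : L2 n) :
    ∑ ι, ‖jetInvLap ι f‖ ^ 2 ≤ (1 + 1 / (4 * Real.pi ^ 2)) * ‖f‖ ^ 2 := by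
  refine hasSum_le (fun k => ?_)
    (hasSum_sum fun ι _ => hasSum_norm_repr_sq (cellBasis n) (jetInvLap ι f))
    ((hasSum_norm_repr_sq (cellBasis n) f).mul_left _)
  change ∑ ι, ‖coef (jetInvLap ι f) k‖ ^ 2 ≤ _ * ‖coef f k‖ ^ 2
  simp only [coef_jetInvLap, norm_mul _ (coef f k), mul_pow _ ‖coef f k‖, ← Finset.sum_mul]
  gcongr
  exact sum_norm_jetSymb_mul_invLapSymb_sq_le k

lemma coef_sum {ι : Type*} (s : Finset ι) (f : ι → L2 n) (k : Fin n → ℤ) :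
    coef (∑ i ∈ s, f i) k = ∑ i ∈ s, coef (f i) k := by
  simp only [← inner_expoLp, inner_sum]

lemma sum_jetInvLap_diag {f : L2 n} (hf : coef f 0 = 0) :
    ∑ i, jetInvLap (Sum.inl (i, i)) f = f := by
  refine ext_coef fun k => ?_
  simp only [coef_sum, coef_jetInvLap, ← Finset.sum_mul]
  rcases eq_or_ne k 0 with rfl | hk
  · simp [hf]
  · rw [sum_jetSymb_diag_mul_invLapSymb hk, one_mul]

lemma eq_jetInvLap_of_coef_eq {u : L2 n} (hu : coef u 0 = 0) {w : JetIndex n → L2 n}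
    (hw : ∀ ι k, coef (w ι) k = jetSymb k ι * coef u k) :
    coef (∑ i, w (Sum.inl (i, i))) 0 = 0 ∧ u = invLap n (∑ i, w (Sum.inl (i, i))) ∧
      ∀ ι, w ι = jetInvLap ι (∑ i, w (Sum.inl (i, i))) := by
  have hu_eq : ∀ k, coef u k = invLapSymb k * coef (∑ i, w (Sum.inl (i, i))) k := by
    intro k
    simp only [coef_sum, hw, ← Finset.sum_mul]
    rcases eq_or_ne k 0 with rfl | hk
    · simp [hu]
    · rw [← mul_assoc, mul_comm (invLapSymb k), sum_jetSymb_diag_mul_invLapSymb hk, one_mul]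
  refine ⟨by simp [coef_sum, hw, hu], ext_coef fun k => ?_, fun ι => ext_coef fun k => ?_⟩
  · rw [coef_invLap, hu_eq]
  · rw [coef_jetInvLap, hw, hu_eq, mul_assoc]

end InverseLaplacian

section Periodicity

variable {n : ℕ}

/-- Reduction of a point modulo `ℤⁿ` to the half-open unit cell. -/
def fractVec (x : Fin n → ℝ) : Fin n → ℝ := fun i => Int.fract (x i)

/-- The translate by `m` of the half-open unit cell `[0,1)ⁿ`. -/
def shiftCell (m : Fin n → ℤ) : Set (Fin n → ℝ) := {x | ∀ i, ⌊x i⌋ = m i}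

lemma shiftCell_zero : shiftCell (0 : Fin n → ℤ) = univ.pi fun _ => Ico 0 1 := by
  ext x
  simp [shiftCell, Int.floor_eq_zero_iff]

lemma measurableSet_shiftCell (m : Fin n → ℤ) : MeasurableSet (shiftCell m) := by
  simp only [shiftCell, ofPred_forall]
  exact MeasurableSet.iInter fun i =>
    (Int.measurable_floor.comp (measurable_pi_apply i)) (measurableSet_singleton (m i))

lemma preimage_add_shiftCell (m : Fin n → ℤ) :
    (fun x : Fin n → ℝ => x + fun i => (m i : ℝ)) ⁻¹' shiftCell m = shiftCell 0 := by
  ext x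
  simp [shiftCell]

lemma cellMeasure_eq_restrict_shiftCell_zero (n : ℕ) :
    cellMeasure n = volume.restrict (shiftCell 0) := by
  rw [cellMeasure, Measure.restrict_congr_set (unitCell_ae_eq_Ico n), shiftCell_zero]

lemma measurable_fractVec : Measurable (fractVec : (Fin n → ℝ) → Fin n → ℝ) :=
  measurable_pi_lambda _ fun i => measurable_fract.comp (measurable_pi_apply i)

lemma fractVec_mem_shiftCell_zero (x : Fin n → ℝ) : fractVec x ∈ shiftCell 0 := fun i => by
  simp [fractVec]

lemma isPeriodic_comp_fractVec {α : Type*} (f : (Fin n → ℝ) → α) :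
    IsPeriodic fun x => f (fractVec x) := fun x m =>
  congrArg f <| funext fun i => Int.fract_add_intCast (x i) (m i)

lemma comp_fractVec_ae_eq {α : Type*} (f : (Fin n → ℝ) → α) :
    (fun x => f (fractVec x)) =ᵐ[cellMeasure n] f := by
  filter_upwards [ae_restrict_mem (measurableSet_unitCell n)] with x hx
  have hfract : fractVec x = x :=
    funext fun i => Int.fract_eq_self.2 (Ioo_subset_Ico_self (hx i (mem_univ i)))
  rw [hfract]

lemma ae_of_ae_cellMeasure {P : (Fin n → ℝ) → Prop}
    (hper : ∀ x (m : Fin n → ℤ), P x → P (x + fun i => (m i : ℝ)))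
    (hcell : ∀ᵐ x ∂(cellMeasure n), P x) : ∀ᵐ x, P x := by
  rw [cellMeasure_eq_restrict_shiftCell_zero, ae_restrict_iff' (measurableSet_shiftCell 0)] at hcell
  have hshift : ∀ᵐ x : Fin n → ℝ, ∀ m : Fin n → ℤ,
      (x + fun i => (m i : ℝ)) ∈ shiftCell 0 → P (x + fun i => (m i : ℝ)) :=
    ae_all_iff.2 fun m =>
      (measurePreserving_add_right volume fun i => (m i : ℝ)).quasiMeasurePreserving.ae hcell
  filter_upwards [hshift] with x hx
  have hfract : (x + fun i => ((-⌊x i⌋ : ℤ) : ℝ)) = fractVec x := by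
    ext i
    simp [fractVec, Int.fract, sub_eq_add_neg]
  have hback : (fractVec x + fun i => (⌊x i⌋ : ℝ)) = x := by
    ext i
    simp [fractVec]
  have hP := hx fun i => -⌊x i⌋
  rw [hfract] at hP
  exact hback ▸ hper _ (fun i => ⌊x i⌋) (hP (fractVec_mem_shiftCell_zero x))

lemma exists_finset_subset_iUnion_shiftCell {K : Set (Fin n → ℝ)} (hK : IsCompact K) :
    ∃ S : Finset (Fin n → ℤ), K ⊆ ⋃ m ∈ S, shiftCell m := by
  obtain ⟨R, hR⟩ := hK.isBounded.subset_closedBall 0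
  refine ⟨Fintype.piFinset fun _ => Finset.Icc ⌊-R⌋ ⌊R⌋, fun x hx => mem_iUnion₂.2
    ⟨fun i => ⌊x i⌋, Fintype.mem_piFinset.2 fun i => ?_, fun _ => rfl⟩⟩
  have hxi := abs_le.1 ((norm_le_pi_norm x i).trans (mem_closedBall_zero_iff.1 (hR hx)))
  exact Finset.mem_Icc.2 ⟨Int.floor_le_floor hxi.1, Int.floor_le_floor hxi.2⟩

variable {E : Type*} [NormedAddCommGroup E]

lemma IsPeriodic.locallyIntegrable {f : (Fin n → ℝ) → E} (hper : IsPeriodic f)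
    (hf : Integrable f (cellMeasure n)) : LocallyIntegrable f := by
  refine locallyIntegrable_iff.2 fun K hK => ?_
  obtain ⟨S, hS⟩ := exists_finset_subset_iUnion_shiftCell hK
  refine IntegrableOn.mono_set (integrableOn_finset_iUnion.2 fun m _ => ?_) hS
  have hshift := (measurePreserving_add_right volume fun i => (m i : ℝ)).integrableOn_comp_preimage
    (MeasurableEquiv.addRight _).measurableEmbedding (f := f) (s := shiftCell m)
  rw [preimage_add_shiftCell, IntegrableOn, ← cellMeasure_eq_restrict_shiftCell_zero] at hshift
  exact hshift.1 (by simpa only [Function.comp_def, hper _ m] using hf)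

variable [NormedSpace ℝ E]

lemma integral_shiftCell (f : (Fin n → ℝ) → E) (m : Fin n → ℤ) :
    ∫ x in shiftCell m, f x = ∫ x in unitCell n, f (x + fun i => (m i : ℝ)) := by
  change _ = ∫ x, f (x + fun i => (m i : ℝ)) ∂(cellMeasure n)
  rw [cellMeasure_eq_restrict_shiftCell_zero, ← preimage_add_shiftCell m]
  exact ((measurePreserving_add_right volume fun i => (m i : ℝ)).setIntegral_preimage_emb
    (MeasurableEquiv.addRight _).measurableEmbedding f (shiftCell m)).symm

lemma integral_smul_eq_sum_integral_cell {f : (Fin n → ℝ) → E} (hper : IsPeriodic f)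
    (hf : Integrable f (cellMeasure n)) {ψ : (Fin n → ℝ) → ℝ} (hψ : Continuous ψ)
    (hcompact : HasCompactSupport ψ) {S : Finset (Fin n → ℤ)}
    (hS : Function.support ψ ⊆ ⋃ m ∈ S, shiftCell m) :
    ∫ x, ψ x • f x = ∑ m ∈ S, ∫ x in unitCell n, ψ (x + fun i => (m i : ℝ)) • f x := by
  have hint := (hper.locallyIntegrable hf).integrable_smul_left_of_hasCompactSupport hψ hcompact
  rw [← setIntegral_eq_integral_of_forall_compl_eq_zero (s := ⋃ m ∈ S, shiftCell m)
      fun x hx => by rw [Function.notMem_support.1 fun h => hx (hS h), zero_smul],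
    integral_biUnion_finset S (fun m _ => measurableSet_shiftCell m) ?_
      fun m _ => hint.integrableOn]
  · simp only [integral_shiftCell, hper _ _]
  · intro m _ m' _ hne
    exact Set.disjoint_left.2 fun x hx hx' => hne <| funext fun i => (hx i).symm.trans (hx' i)

end Periodicity

section Periodization

variable {n : ℕ}

/-- The sum of all integer translates of `ψ`. -/
def periodize (ψ : (Fin n → ℝ) → ℝ) (x : Fin n → ℝ) : ℝ :=
  ∑' m : Fin n → ℤ, ψ (x + fun i => (m i : ℝ))

lemma periodize_eq_sum {ψ : (Fin n → ℝ) → ℝ} {S : Finset (Fin n → ℤ)}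
    (hS : Function.support ψ ⊆ ⋃ m ∈ S, shiftCell m) {x : Fin n → ℝ} (hx : x ∈ unitCell n) :
    periodize ψ x = ∑ m ∈ S, ψ (x + fun i => (m i : ℝ)) := by
  refine tsum_eq_sum fun m hm => ?_
  by_contra hne
  obtain ⟨m', hm', hmem⟩ := mem_iUnion₂.1 (hS hne)
  have heq : m = m' := funext fun i => by
    simpa [Int.floor_eq_zero_iff.2 (Ioo_subset_Ico_self (hx i (mem_univ i)))] using hmem i
  exact hm (heq ▸ hm')

lemma memLp_periodize {ψ : (Fin n → ℝ) → ℝ} (hψ : Continuous ψ) (hcompact : HasCompactSupport ψ)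
    (p : ℝ≥0∞) : MemLp (periodize ψ) p (cellMeasure n) := by
  obtain ⟨S, hS⟩ := exists_finset_subset_iUnion_shiftCell hcompact.isCompact
  obtain ⟨C, hC⟩ := hψ.bounded_above_of_compact_support hcompact
  refine (memLp_congr_ae ?_).1 <| memLp_finsetSum S fun m _ => MemLp.of_bound
    (hψ.comp (continuous_add_const fun i => (m i : ℝ))).aestronglyMeasurable C
    (Eventually.of_forall fun x => hC _)
  filter_upwards [ae_restrict_mem (measurableSet_unitCell n)] with x hx
  exact (periodize_eq_sum ((subset_tsupport ψ).trans hS) hx).symm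

lemma integral_smul_eq_integral_periodize_smul {E : Type*} [NormedAddCommGroup E]
    [NormedSpace ℝ E] {f : (Fin n → ℝ) → E} (hper : IsPeriodic f)
    (hf : Integrable f (cellMeasure n)) {ψ : (Fin n → ℝ) → ℝ} (hψ : Continuous ψ)
    (hcompact : HasCompactSupport ψ) :
    ∫ x, ψ x • f x = ∫ x in unitCell n, periodize ψ x • f x := by
  obtain ⟨S, hS⟩ := exists_finset_subset_iUnion_shiftCell hcompact.isCompact
  have hsupp := (subset_tsupport ψ).trans hS
  obtain ⟨C, hC⟩ := hψ.bounded_above_of_compact_support hcompact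
  rw [integral_smul_eq_sum_integral_cell hper hf hψ hcompact hsupp, ← integral_finsetSum]
  · refine setIntegral_congr_fun (measurableSet_unitCell n) fun x hx => ?_
    simp only [periodize_eq_sum hsupp hx, Finset.sum_smul]
  · exact fun m _ => hf.bdd_smul C (hψ.comp (continuous_add_const _)).aestronglyMeasurable
      (Eventually.of_forall fun x => hC _)

lemma isOpen_unitCell (n : ℕ) : IsOpen (unitCell n) :=
  isOpen_set_pi finite_univ fun _ _ => isOpen_Ioo

lemma pd_periodize {ψ : (Fin n → ℝ) → ℝ} (hψ : Differentiable ℝ ψ) (hcompact : HasCompactSupport ψ)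
    (i : Fin n) {x : Fin n → ℝ} (hx : x ∈ unitCell n) :
    pd (periodize ψ) i x = periodize (pd ψ i) x := by
  obtain ⟨S, hS⟩ := exists_finset_subset_iUnion_shiftCell hcompact.isCompact
  have hpd : Function.support (pd ψ i) ⊆ ⋃ m ∈ S, shiftCell m := by
    refine subset_trans (fun y hy => support_fderiv_subset ℝ (f := ψ) fun hzero => hy ?_) hS
    rw [pd, hzero, _root_.zero_apply]
  have hderiv : HasFDerivAt (fun y => ∑ m ∈ S, ψ (y + fun i => (m i : ℝ)))
      (∑ m ∈ S, fderiv ℝ ψ (x + fun i => (m i : ℝ))) x :=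
    HasFDerivAt.fun_sum fun m _ => (hasFDerivAt_comp_add_right _).2 (hψ _).hasFDerivAt
  have hlocal : periodize ψ =ᶠ[𝓝 x] fun y => ∑ m ∈ S, ψ (y + fun i => (m i : ℝ)) := by
    filter_upwards [(isOpen_unitCell n).mem_nhds hx] with y hy
    exact periodize_eq_sum ((subset_tsupport ψ).trans hS) hy
  rw [periodize_eq_sum hpd hx, pd, (hderiv.congr_of_eventuallyEq hlocal).fderiv]
  simp only [sum_apply, pd]

end Periodization

section WeakPartial

variable {n : ℕ} {E : Type*} [NormedAddCommGroup E] [NormedSpace ℝ E]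

/-- `v` is the weak partial derivative `∂ᵢw` on `ℝⁿ`, tested against real-valued functions. -/
def HasWeakPartial (i : Fin n) (w v : (Fin n → ℝ) → E) : Prop :=
  ∀ φ : (Fin n → ℝ) → ℝ, ContDiff ℝ (⊤ : ℕ∞) φ → HasCompactSupport φ →
    ∫ x, pd φ i x • w x = -∫ x, φ x • v x

lemma continuous_pd {φ : (Fin n → ℝ) → ℝ} (hφ : ContDiff ℝ 1 φ) (i : Fin n) :
    Continuous (pd φ i) :=
  (hφ.continuous_fderiv one_ne_zero).clm_apply continuous_const

lemma contDiff_pd {φ : (Fin n → ℝ) → ℝ} (hφ : ContDiff ℝ (⊤ : ℕ∞) φ) (i : Fin n) :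
    ContDiff ℝ (⊤ : ℕ∞) (pd φ i) :=
  (hφ.fderiv_right (m := (⊤ : ℕ∞)) (by simp)).clm_apply contDiff_const

lemma hasCompactSupport_pd {φ : (Fin n → ℝ) → ℝ} (hφ : HasCompactSupport φ) (i : Fin n) :
    HasCompactSupport (pd φ i) :=
  hφ.fderiv_apply (𝕜 := ℝ) _

lemma pd_mul {φ ψ : (Fin n → ℝ) → ℝ} (hφ : Differentiable ℝ φ) (hψ : Differentiable ℝ ψ)
    (i : Fin n) (x : Fin n → ℝ) :
    pd (fun y => φ y * ψ y) i x = pd φ i x * ψ x + φ x * pd ψ i x := by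
  rw [pd, fderiv_fun_mul (hφ x) (hψ x)]
  simp only [add_apply, smul_apply, smul_eq_mul, pd]
  ring

lemma hasWeakPartial_of_contDiff {f : (Fin n → ℝ) → E} (hf : ContDiff ℝ 1 f) (i : Fin n) :
    HasWeakPartial i f fun x => fderiv ℝ f x (Pi.single i 1) := by
  intro φ hφ hcompact
  have hf' : Continuous fun x => fderiv ℝ f x (Pi.single i 1) :=
    (hf.continuous_fderiv one_ne_zero).clm_apply continuous_const
  have hφ' := continuous_pd (hφ.of_le (by simp)) i
  rw [eq_comm, neg_eq_iff_eq_neg]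
  exact integral_smul_fderiv_eq_neg_fderiv_smul_of_integrable
    ((hφ'.smul hf.continuous).integrable_of_hasCompactSupport
      (hasCompactSupport_pd hcompact i).smul_right)
    ((hφ.continuous.smul hf').integrable_of_hasCompactSupport hcompact.smul_right)
    ((hφ.continuous.smul hf.continuous).integrable_of_hasCompactSupport hcompact.smul_right)
    (fun x _ => (hφ.differentiable (by simp)) x) fun x _ => hf.differentiable one_ne_zero x

variable {F : Type*} [NormedAddCommGroup F] [NormedSpace ℝ F] [CompleteSpace E] [CompleteSpace F]

lemma HasWeakPartial.clm_comp {i : Fin n} {w v : (Fin n → ℝ) → E} (h : HasWeakPartial i w v)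
    (hw : LocallyIntegrable w) (hv : LocallyIntegrable v) (L : E →L[ℝ] F) :
    HasWeakPartial i (fun x => L (w x)) fun x => L (v x) := by
  intro φ hφ hcompact
  simp only [← map_smul]
  rw [L.integral_comp_comm (hw.integrable_smul_left_of_hasCompactSupport
      (continuous_pd (hφ.of_le (by simp)) i) (hasCompactSupport_pd hcompact i)),
    L.integral_comp_comm (hv.integrable_smul_left_of_hasCompactSupport hφ.continuous hcompact),
    h φ hφ hcompact, map_neg]

end WeakPartial

section PartitionOfUnity

variable {n : ℕ}

/-- A smooth bump on the line, supported in `[-1,1]`, whose integer translates sum to one. -/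
def stepBump (t : ℝ) : ℝ := Real.smoothTransition (t + 1) - Real.smoothTransition t

lemma stepBump_eq_zero {t : ℝ} (ht : t ∉ Ico (-1 : ℝ) 1) : stepBump t = 0 := by
  rw [mem_Ico, not_and_or, not_le, not_lt] at ht
  rcases ht with ht | ht
  · rw [stepBump, Real.smoothTransition.zero_of_nonpos (by linarith),
      Real.smoothTransition.zero_of_nonpos (by linarith), sub_zero]
  · rw [stepBump, Real.smoothTransition.one_of_one_le (by linarith),
      Real.smoothTransition.one_of_one_le ht, sub_self]

lemma stepBump_sub_one_add_stepBump {t : ℝ} (ht : t ∈ Ioo (0 : ℝ) 1) :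
    stepBump (t - 1) + stepBump t = 1 := by
  rw [stepBump, stepBump, Real.smoothTransition.one_of_one_le (x := t + 1) (by linarith [ht.1]),
    Real.smoothTransition.zero_of_nonpos (x := t - 1) (by linarith [ht.2])]
  ring_nf

/-- A smooth compactly supported function on `ℝⁿ` whose integer translates sum to one. -/
def cutoff (x : Fin n → ℝ) : ℝ := ∏ i, stepBump (x i)

lemma contDiff_cutoff : ContDiff ℝ (⊤ : ℕ∞) (cutoff : (Fin n → ℝ) → ℝ) := by
  have hstep : ContDiff ℝ (⊤ : ℕ∞) stepBump :=
    (Real.smoothTransition.contDiff.comp (contDiff_id.add contDiff_const)).sub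
      Real.smoothTransition.contDiff
  exact contDiff_prod fun i _ => hstep.comp (contDiff_apply ℝ ℝ i)

lemma support_cutoff_subset :
    Function.support (cutoff : (Fin n → ℝ) → ℝ) ⊆ univ.pi fun _ => Ico (-1) 1 := by
  intro x hx i _
  by_contra hi
  exact hx (Finset.prod_eq_zero (Finset.mem_univ i) (stepBump_eq_zero hi))

lemma hasCompactSupport_cutoff : HasCompactSupport (cutoff : (Fin n → ℝ) → ℝ) :=
  HasCompactSupport.of_support_subset_isCompact
    (isCompact_univ_pi fun _ => isCompact_Icc (a := (-1 : ℝ)) (b := 1))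
    (support_cutoff_subset.trans (Set.pi_mono fun _ _ => Ico_subset_Icc_self))

lemma periodize_cutoff {x : Fin n → ℝ} (hx : x ∈ unitCell n) : periodize cutoff x = 1 := by
  have hsupp : Function.support (cutoff : (Fin n → ℝ) → ℝ) ⊆
      ⋃ m ∈ Fintype.piFinset fun _ : Fin n => ({-1, 0} : Finset ℤ), shiftCell m := by
    intro y hy
    refine mem_iUnion₂.2 ⟨fun i => ⌊y i⌋, Fintype.mem_piFinset.2 fun i => ?_, fun _ => rfl⟩
    have hyi := support_cutoff_subset hy i (mem_univ i)
    have hlow : -1 ≤ ⌊y i⌋ := Int.le_floor.2 (by simpa using hyi.1)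
    have hupp : ⌊y i⌋ < 1 := Int.floor_lt.2 (by simpa using hyi.2)
    simp only [Finset.mem_insert, Finset.mem_singleton]
    lia
  rw [periodize_eq_sum hsupp hx]
  simp only [cutoff, Pi.add_apply]
  rw [← Finset.prod_univ_sum (fun _ => {-1, 0}) fun i (m : ℤ) => stepBump (x i + m)]
  refine Finset.prod_eq_one fun i _ => ?_
  rw [Finset.sum_pair (by norm_num)]
  simpa [← sub_eq_add_neg] using stepBump_sub_one_add_stepBump (hx i (mem_univ i))

lemma periodize_pd_cutoff (i : Fin n) {x : Fin n → ℝ} (hx : x ∈ unitCell n) :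
    periodize (pd cutoff i) x = 0 := by
  have hlocal : periodize cutoff =ᶠ[𝓝 x] fun _ => 1 := by
    filter_upwards [(isOpen_unitCell n).mem_nhds hx] with y hy
    exact periodize_cutoff hy
  rw [← pd_periodize (contDiff_cutoff.differentiable (by simp)) hasCompactSupport_cutoff i hx, pd,
    hlocal.fderiv_eq, fderiv_fun_const, Pi.zero_apply, _root_.zero_apply]

variable {E : Type*} [NormedAddCommGroup E] [NormedSpace ℝ E] {f : (Fin n → ℝ) → E}

lemma integral_cutoff_smul (hper : IsPeriodic f) (hf : Integrable f (cellMeasure n)) :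
    ∫ x, cutoff x • f x = ∫ x in unitCell n, f x := by
  rw [integral_smul_eq_integral_periodize_smul hper hf contDiff_cutoff.continuous
    hasCompactSupport_cutoff]
  refine setIntegral_congr_fun (measurableSet_unitCell n) fun x hx => ?_
  simp only [periodize_cutoff hx, one_smul]

lemma integral_pd_cutoff_smul (hper : IsPeriodic f) (hf : Integrable f (cellMeasure n))
    (i : Fin n) : ∫ x, pd cutoff i x • f x = 0 := by
  rw [integral_smul_eq_integral_periodize_smul hper hf
    (continuous_pd (contDiff_cutoff.of_le (by simp)) i) (hasCompactSupport_pd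
    hasCompactSupport_cutoff i)]
  refine setIntegral_eq_zero_of_forall_eq_zero fun x hx => ?_
  rw [periodize_pd_cutoff i hx, zero_smul]

end PartitionOfUnity

section PeriodicTest

variable {n : ℕ}

lemma integrable_smul_cell {E : Type*} [NormedAddCommGroup E] [NormedSpace ℝ E]
    {ψ : (Fin n → ℝ) → ℝ} (hψ : Continuous ψ) {f : (Fin n → ℝ) → E}
    (hf : Integrable f (cellMeasure n)) : Integrable (fun x => ψ x • f x) (cellMeasure n) := by
  obtain ⟨C, hC⟩ := (isCompact_univ_pi fun _ : Fin n =>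
    isCompact_Icc (a := (0 : ℝ)) (b := 1)).exists_bound_of_continuousOn hψ.continuousOn
  refine hf.bdd_smul C hψ.aestronglyMeasurable ?_
  filter_upwards [ae_restrict_mem (measurableSet_unitCell n)] with x hx
  exact hC x (Set.pi_mono (fun _ _ => Ioo_subset_Icc_self) hx)

lemma IsPeriodic.pd {ψ : (Fin n → ℝ) → ℝ} (hψ : IsPeriodic ψ) (i : Fin n) :
    IsPeriodic (pd ψ i) := by
  intro x m
  simp only [_root_.pd]
  rw [← fderiv_comp_add_right, show (fun y => ψ (y + fun i => (m i : ℝ))) = ψ from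
    funext fun y => hψ y m]

lemma IsPeriodic.smul {E : Type*} [NormedAddCommGroup E] [NormedSpace ℝ E]
    {ψ : (Fin n → ℝ) → ℝ} (hψ : IsPeriodic ψ) {f : (Fin n → ℝ) → E} (hf : IsPeriodic f) :
    IsPeriodic fun x => ψ x • f x := fun x m => by
  simp only [hψ x m, hf x m]

lemma HasWeakPartial.integral_cell_pd_smul {E : Type*} [NormedAddCommGroup E] [NormedSpace ℝ E]
    {i : Fin n} {w v : (Fin n → ℝ) → E} (h : HasWeakPartial i w v) (hwper : IsPeriodic w)
    (hvper : IsPeriodic v) (hw : Integrable w (cellMeasure n)) (hv : Integrable v (cellMeasure n))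
    {ψ : (Fin n → ℝ) → ℝ} (hψ : ContDiff ℝ (⊤ : ℕ∞) ψ) (hψper : IsPeriodic ψ) :
    ∫ x in unitCell n, pd ψ i x • w x = -∫ x in unitCell n, ψ x • v x := by
  have hψ' := continuous_pd (hψ.of_le (by simp)) i
  have hper₁ := hψper.smul hwper
  have hper₂ := (hψper.pd i).smul hwper
  have hint₁ := integrable_smul_cell hψ.continuous hw
  have hint₂ := integrable_smul_cell hψ' hw
  have hcut := contDiff_cutoff (n := n)
  have htest := h (fun x => cutoff x * ψ x) (hcut.mul hψ) hasCompactSupport_cutoff.mul_right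
  simp only [pd_mul (hcut.differentiable (by simp)) (hψ.differentiable (by simp)), add_smul,
    mul_smul] at htest
  rw [integral_add
      ((hper₁.locallyIntegrable hint₁).integrable_smul_left_of_hasCompactSupport
        (continuous_pd (hcut.of_le (by simp)) i) (hasCompactSupport_pd hasCompactSupport_cutoff i))
      ((hper₂.locallyIntegrable hint₂).integrable_smul_left_of_hasCompactSupport
        hcut.continuous hasCompactSupport_cutoff),
    integral_pd_cutoff_smul hper₁ hint₁, zero_add, integral_cutoff_smul hper₂ hint₂,
    integral_cutoff_smul (hψper.smul hvper) (integrable_smul_cell hψ.continuous hv)] at htest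
  exact htest

end PeriodicTest

section FourierWeakPartial

variable {n : ℕ}

lemma fderiv_expo (k : Fin n → ℤ) (x : Fin n → ℝ) (i : Fin n) :
    fderiv ℝ (expo k) x (Pi.single i 1) = derivSymb i k * expo k x := by
  let phase : (Fin n → ℝ) →L[ℝ] ℂ :=
    ∑ j, (k j : ℂ) • Complex.ofRealCLM.comp (ContinuousLinearMap.proj j)
  have hphase : ∀ y : Fin n → ℝ, phase y = ∑ j, (k j : ℂ) * (y j : ℂ) := fun y => by simp [phase]
  have hexpo : expo k = fun y => cexp (2 * Real.pi * I * phase y) := by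
    ext y
    rw [hphase, expo]
  have hsingle : phase (Pi.single i 1) = k i := by
    rw [hphase, Finset.sum_eq_single i (fun j _ hj => by simp [hj]) (by simp)]
    simp
  rw [hexpo, ((phase.hasFDerivAt.const_mul (2 * Real.pi * I)).cexp).fderiv]
  simp only [smul_apply, hsingle, smul_eq_mul, derivSymb]
  ring

lemma pd_clm_comp_expo (L : ℂ →L[ℝ] ℝ) (k : Fin n → ℤ) (i : Fin n) :
    pd (fun x => L (expo k x)) i = fun x => L (derivSymb i k * expo k x) := by
  ext x
  have hdiff : DifferentiableAt ℝ (expo k) x :=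
    (contDiff_expo k (m := 1)).differentiable one_ne_zero x
  rw [← fderiv_expo, pd]
  exact congrArg (· (Pi.single i 1)) (L.hasFDerivAt.comp x hdiff.hasFDerivAt).fderiv

lemma hasWeakPartial_expo (i : Fin n) (k : Fin n → ℤ) :
    HasWeakPartial i (expo k) fun x => derivSymb i k * expo k x := by
  simpa only [fderiv_expo] using hasWeakPartial_of_contDiff (contDiff_expo k) i

lemma integral_cell_mul_eq_re_add_im {ψ f : (Fin n → ℝ) → ℂ} (hψ : Continuous ψ)
    (hf : Integrable f (cellMeasure n)) :
    ∫ x in unitCell n, ψ x * f x =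
      (∫ x in unitCell n, reCLM (ψ x) • f x) + I * ∫ x in unitCell n, imCLM (ψ x) • f x := by
  have hpart : ∀ L : ℂ →L[ℝ] ℝ, Integrable (fun x => L (ψ x) • f x) (cellMeasure n) := fun L =>
    integrable_smul_cell (L.continuous.comp hψ) hf
  rw [← integral_const_mul, ← integral_add (hpart reCLM) ((hpart imCLM).const_mul I)]
  refine integral_congr_ae (Eventually.of_forall fun x => ?_)
  simp only [reCLM_apply, imCLM_apply, real_smul]
  linear_combination -f x * re_add_im (ψ x)

lemma HasWeakPartial.coef_eq {i : Fin n} {w v : (Fin n → ℝ) → ℂ} (h : HasWeakPartial i w v)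
    (hwper : IsPeriodic w) (hvper : IsPeriodic v) (hw : MemLp w 2 (cellMeasure n))
    (hv : MemLp v 2 (cellMeasure n)) (k : Fin n → ℤ) :
    coef (hv.toLp v) k = derivSymb i k * coef (hw.toLp w) k := by
  have hexpo : Continuous (expo (-k) : (Fin n → ℝ) → ℂ) := (contDiff_expo (-k) (m := 0)).continuous
  have hpart : ∀ L : ℂ →L[ℝ] ℝ,
      ∫ x in unitCell n, L (derivSymb i (-k) * expo (-k) x) • w x =
        -∫ x in unitCell n, L (expo (-k) x) • v x := fun L => by
    simpa only [pd_clm_comp_expo] using h.integral_cell_pd_smul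
      (ψ := fun x => L (expo (-k) x)) hwper hvper (hw.integrable one_le_two)
      (hv.integrable one_le_two) (L.contDiff.comp (contDiff_expo (-k)))
      fun x m => congrArg L (isPeriodic_expo (-k) x m)
  have hibp : ∫ x in unitCell n, derivSymb i (-k) * expo (-k) x * w x =
      -∫ x in unitCell n, expo (-k) x * v x := by
    rw [integral_cell_mul_eq_re_add_im (ψ := fun x => derivSymb i (-k) * expo (-k) x)
        (continuous_const.mul hexpo) (hw.integrable one_le_two),
      integral_cell_mul_eq_re_add_im hexpo (hv.integrable one_le_two), hpart, hpart]
    ring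
  simp only [mul_assoc, integral_const_mul] at hibp
  simp only [coef_toLp, mul_comm _ (expo (-k) _)]
  have hneg : derivSymb i (-k) = -derivSymb i k := by simp [derivSymb]
  rw [hneg] at hibp
  linear_combination hibp

lemma memLp_ofReal_periodize {φ : (Fin n → ℝ) → ℝ} (hφ : Continuous φ)
    (hcompact : HasCompactSupport φ) :
    MemLp (fun x => (periodize φ x : ℂ)) 2 (cellMeasure n) :=
  (memLp_periodize hφ hcompact 2).ofReal

lemma integral_smul_eq_inner_periodize {φ : (Fin n → ℝ) → ℝ} (hφ : Continuous φ)
    (hcompact : HasCompactSupport φ) {f : (Fin n → ℝ) → ℂ} (hper : IsPeriodic f)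
    (hf : MemLp f 2 (cellMeasure n)) :
    ∫ x, φ x • f x = ⟪(memLp_ofReal_periodize hφ hcompact).toLp _, hf.toLp f⟫_ℂ := by
  rw [integral_smul_eq_integral_periodize_smul hper (hf.integrable one_le_two) hφ hcompact,
    L2.inner_def]
  refine integral_congr_ae ?_
  filter_upwards [(memLp_ofReal_periodize hφ hcompact).coeFn_toLp, hf.coeFn_toLp] with x hφx hfx
  rw [hφx, hfx, RCLike.inner_apply, real_smul, mul_comm]
  exact congrArg _ (conj_ofReal _).symm

lemma hasWeakPartial_of_coef_eq {i : Fin n} {w v : (Fin n → ℝ) → ℂ}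
    (hwper : IsPeriodic w) (hvper : IsPeriodic v) (hw : MemLp w 2 (cellMeasure n))
    (hv : MemLp v 2 (cellMeasure n))
    (hcoef : ∀ k, coef (hv.toLp v) k = derivSymb i k * coef (hw.toLp w) k) :
    HasWeakPartial i w v := by
  intro φ hφ hcompact
  have hφ' := continuous_pd (hφ.of_le (by simp)) i
  have hcompact' := hasCompactSupport_pd hcompact i
  rw [integral_smul_eq_inner_periodize hφ' hcompact' hwper hw,
    integral_smul_eq_inner_periodize hφ.continuous hcompact hvper hv]
  set Φ := (memLp_ofReal_periodize hφ.continuous hcompact).toLp _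
  set Φ' := (memLp_ofReal_periodize hφ' hcompact').toLp _
  have hexpo : ∀ k, ⟪Φ', expoLp k⟫_ℂ = -(derivSymb i k * ⟪Φ, expoLp k⟫_ℂ) := fun k => by
    rw [expoLp, ← integral_smul_eq_inner_periodize hφ' hcompact' (isPeriodic_expo k),
      ← integral_smul_eq_inner_periodize hφ.continuous hcompact (isPeriodic_expo k),
      hasWeakPartial_expo i k φ hφ hcompact]
    rw [← integral_const_mul]
    simp only [mul_smul_comm]
  rw [← (cellBasis n).tsum_inner_mul_inner, ← (cellBasis n).tsum_inner_mul_inner, ← tsum_neg]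
  refine tsum_congr fun k => ?_
  rw [coe_cellBasis, hexpo, inner_expoLp, inner_expoLp, hcoef]
  ring

end FourierWeakPartial

section WeakJet

variable {n : ℕ}

/-- `w` collects the weak first- and second-order partial derivatives of `u`. -/
def HasWeakJet {E : Type*} [NormedAddCommGroup E] [NormedSpace ℝ E] (u : (Fin n → ℝ) → E)
    (w : JetIndex n → (Fin n → ℝ) → E) : Prop :=
  ∀ i, HasWeakPartial i u (w (Sum.inr i)) ∧
    ∀ k, HasWeakPartial k (w (Sum.inr i)) (w (Sum.inl (i, k)))

lemma HasWeakJet.clm_comp {E F : Type*} [NormedAddCommGroup E] [NormedSpace ℝ E] [CompleteSpace E]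
    [NormedAddCommGroup F] [NormedSpace ℝ F] [CompleteSpace F] {u : (Fin n → ℝ) → E}
    {w : JetIndex n → (Fin n → ℝ) → E} (h : HasWeakJet u w) (hu : LocallyIntegrable u)
    (hw : ∀ ι, LocallyIntegrable (w ι)) (L : E →L[ℝ] F) :
    HasWeakJet (fun x => L (u x)) fun ι x => L (w ι x) := fun i =>
  ⟨(h i).1.clm_comp hu (hw _) L, fun k => ((h i).2 k).clm_comp (hw _) (hw _) L⟩

lemma hasWeakJet_iff_coef_eq {u : (Fin n → ℝ) → ℂ} {w : JetIndex n → (Fin n → ℝ) → ℂ}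
    (huper : IsPeriodic u) (hwper : ∀ ι, IsPeriodic (w ι)) (hu : MemLp u 2 (cellMeasure n))
    (hw : ∀ ι, MemLp (w ι) 2 (cellMeasure n)) :
    HasWeakJet u w ↔ ∀ ι k, coef ((hw ι).toLp (w ι)) k = jetSymb k ι * coef (hu.toLp u) k := by
  constructor
  · rintro h (⟨i, j⟩ | i) k
    · rw [((h i).2 j).coef_eq (hwper _) (hwper _) (hw _) (hw _),
        (h i).1.coef_eq huper (hwper _) hu (hw _), ← mul_assoc, mul_comm (derivSymb j k)]
      rfl
    · exact (h i).1.coef_eq huper (hwper _) hu (hw _) k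
  · intro h i
    refine ⟨hasWeakPartial_of_coef_eq huper (hwper _) hu (hw _) (h (Sum.inr i)), fun j =>
      hasWeakPartial_of_coef_eq (hwper _) (hwper _) (hw _) (hw _) fun k => ?_⟩
    rw [h, h, ← mul_assoc, mul_comm (derivSymb j k)]
    rfl

end WeakJet

section CellOperator

variable {n : ℕ} {A : (Fin n → ℝ) → Matrix (Fin n) (Fin n) ℝ} {b : (Fin n → ℝ) → Fin n → ℝ}
  {r : (Fin n → ℝ) → ℝ} {δ : ℝ}

lemma memLp_two_of_integrableOn_sq {f : (Fin n → ℝ) → ℝ} (hf : Measurable f)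
    (hsq : IntegrableOn (fun x => f x ^ 2) (unitCell n)) : MemLp f 2 (cellMeasure n) :=
  (memLp_two_iff_integrable_sq hf.aestronglyMeasurable).2 hsq

lemma coef_zero_toLp_ofReal {f : (Fin n → ℝ) → ℝ}
    (hf : MemLp (fun x => (f x : ℂ)) 2 (cellMeasure n)) :
    coef (hf.toLp _) 0 = (∫ x in unitCell n, f x : ℝ) := by
  simp only [coef_toLp, neg_zero, expo_zero, mul_one]
  exact integral_ofReal

namespace IsCordesPair

lemma memLp_ofReal_jet (h : IsCordesPair A b δ) (ι : JetIndex n) :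
    MemLp (fun x => ((jet (A x) (b x) ι : ℝ) : ℂ)) ∞ (cellMeasure n) :=
  ((h.memLp_jet ι).restrict _).ofReal

lemma memLp_residual (h : IsCordesPair A b δ) (ι : JetIndex n) :
    MemLp (fun x => ((gam A b x * jet (A x) (b x) ι - jet 1 0 ι : ℝ) : ℂ)) ∞ (cellMeasure n) :=
  ((((h.memLp_jet ι).mul h.memLp_gam).restrict (unitCell n)).sub (memLp_const (jet 1 0 ι))).ofReal

/-- The operator `f ↦ (A : D² + b · ∇) Δ⁻¹ f`. -/
def cellOp (h : IsCordesPair A b δ) : L2 n →L[ℂ] L2 n :=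
  combCLM h.memLp_ofReal_jet jetInvLap

/-- The operator `f ↦ (γ (A : D² + b · ∇) - Δ) Δ⁻¹ f`, where `γ = gam A b`. -/
def residualOp (h : IsCordesPair A b δ) : L2 n →L[ℂ] L2 n :=
  combCLM h.memLp_residual jetInvLap

lemma norm_residualOp_lt_one (h : IsCordesPair A b δ) : ‖h.residualOp‖ < 1 := by
  refine (norm_combCLM_le h.memLp_residual (sub_nonneg.2 h.delta_le_one) ?_
    sum_norm_jetInvLap_sq_le).trans_lt h.sqrt_contraction_lt_one
  filter_upwards [ae_restrict_of_ae h.ae_sum_gam_mul_jet_sub_sq_le] with x hx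
  simpa only [norm_real, Real.norm_eq_abs, sq_abs] using hx

lemma coeFn_residualOp_add (h : IsCordesPair A b δ) {f : L2 n} (hf : coef f 0 = 0) :
    (fun x => f x + h.residualOp f x) =ᵐ[cellMeasure n] fun x => gam A b x * h.cellOp f x := by
  have hdiag := Lp.coeFn_finsetSum (s := Finset.univ)
    (f := fun i : Fin n => jetInvLap (Sum.inl (i, i)) f)
  rw [sum_jetInvLap_diag hf] at hdiag
  filter_upwards [hdiag, coeFn_combCLM h.memLp_residual jetInvLap f,
    coeFn_combCLM h.memLp_ofReal_jet jetInvLap f] with x hdiag hres hcell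
  have hlap : f x = ∑ ι : JetIndex n, ((jet 1 0 ι : ℝ) : ℂ) * jetInvLap ι f x := by
    rw [hdiag]
    simp [jet, Fintype.sum_prod_type, Matrix.one_apply, apply_ite ofReal]
  rw [residualOp, cellOp, hres, hcell, hlap, ← Finset.sum_add_distrib, Finset.mul_sum]
  refine Finset.sum_congr rfl fun ι _ => ?_
  push_cast
  ring

lemma exists_bijective_eq_cellOp (h : IsCordesPair A b δ) :
    ∃ T : L2 n →L[ℂ] L2 n, Function.Bijective T ∧ ∀ f, coef f 0 = 0 → T f = h.cellOp f := by
  have hgam : MemLp (fun x => (gam A b x : ℂ)) ∞ (cellMeasure n) := (h.memLp_gam.restrict _).ofReal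
  have hinv : MemLp (fun x => (((gam A b x)⁻¹ : ℝ) : ℂ)) ∞ (cellMeasure n) :=
    (h.memLp_inv_gam.restrict _).ofReal
  have hcancel : ∀ᵐ x ∂cellMeasure n, (((gam A b x)⁻¹ : ℝ) : ℂ) * (gam A b x : ℂ) = 1 := by
    filter_upwards [ae_restrict_of_ae h.ae_gam_pos] with x hx
    exact_mod_cast inv_mul_cancel₀ hx.ne'
  refine ⟨mulCLM hinv ∘L (1 + h.residualOp), (bijective_mulCLM hinv hgam hcancel).comp
    (bijective_one_add_of_norm_lt_one h.norm_residualOp_lt_one), fun f hf => Lp.ext ?_⟩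
  filter_upwards [coeFn_mulCLM hinv (f + h.residualOp f), Lp.coeFn_add f (h.residualOp f),
    h.coeFn_residualOp_add hf, hcancel] with x hmul hadd hres hx
  calc mulCLM hinv (f + h.residualOp f) x
      = (((gam A b x)⁻¹ : ℝ) : ℂ) * (f x + h.residualOp f x) := by rw [hmul, hadd, Pi.add_apply]
    _ = h.cellOp f x := by rw [hres, ← mul_assoc, hx, one_mul]

end IsCordesPair

lemma jet_hess_grad_clm_comp_expo (L : ℂ →L[ℝ] ℝ) (k : Fin n → ℤ) (x : Fin n → ℝ)
    (ι : JetIndex n) :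
    jet (hess (fun y => L (expo k y)) x) (grad (fun y => L (expo k y)) x) ι =
      L (jetSymb k ι * expo k x) := by
  rcases ι with ⟨i, j⟩ | i
  · have hpd := pd_clm_comp_expo (L ∘L ContinuousLinearMap.mul ℝ ℂ (derivSymb j k)) k i
    simp only [ContinuousLinearMap.comp_apply, ContinuousLinearMap.mul_apply'] at hpd
    simp only [jet, Sum.elim_inl, hess, Matrix.of_apply, pd_clm_comp_expo, hpd, jetSymb]
    rw [← mul_assoc, mul_comm (derivSymb j k)]
  · simp only [jet, Sum.elim_inr, grad, pd_clm_comp_expo, jetSymb]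

namespace IsInvariantMeasure

lemma integral_mul_sum_jetSymb_expo (hr : IsInvariantMeasure A b r) (k : Fin n → ℤ) :
    ∫ x in unitCell n, (r x : ℂ) * ∑ ι, ((jet (A x) (b x) ι : ℝ) : ℂ) * (jetSymb k ι * expo k x) =
      0 := by
  by_cases hint : IntegrableOn (fun x => (r x : ℂ) * ∑ ι, ((jet (A x) (b x) ι : ℝ) : ℂ) *
    (jetSymb k ι * expo k x)) (unitCell n)
  · have hpart : ∀ L : ℂ →L[ℝ] ℝ, L (∫ x in unitCell n, (r x : ℂ) *
        ∑ ι, ((jet (A x) (b x) ι : ℝ) : ℂ) * (jetSymb k ι * expo k x)) = 0 := fun L => by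
      rw [← L.integral_comp_comm hint, ← hr.2.2.2.2 (fun x => L (expo k x))
        (L.contDiff.comp (contDiff_expo k)) fun x m => congrArg L (isPeriodic_expo k x m)]
      simp only [frobInner_add_dotc, jet_hess_grad_clm_comp_expo, ← real_smul, map_smul, map_sum,
        smul_eq_mul]
    exact Complex.ext (hpart reCLM) (hpart imCLM)
  · exact integral_undef hint

lemma memLp_ofReal (hr : IsInvariantMeasure A b r) :
    MemLp (fun x => (r x : ℂ)) 2 (cellMeasure n) :=
  (memLp_two_of_integrableOn_sq hr.1 hr.2.2.1).ofReal

lemma inner_toLp (hr : IsInvariantMeasure A b r) (f : L2 n) :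
    ⟪hr.memLp_ofReal.toLp _, f⟫_ℂ = ∫ x in unitCell n, (r x : ℂ) * f x := by
  rw [L2.inner_def]
  refine integral_congr_ae ?_
  filter_upwards [hr.memLp_ofReal.coeFn_toLp] with x hx
  rw [hx, RCLike.inner_apply, mul_comm]
  exact congrArg (· * f x) (conj_ofReal _)

lemma toLp_ne_zero (hr : IsInvariantMeasure A b r) : hr.memLp_ofReal.toLp _ ≠ 0 := by
  intro hzero
  have hmass := coef_zero_toLp_ofReal hr.memLp_ofReal
  rw [hzero, ← inner_expoLp, inner_zero_right, hr.2.2.2.1] at hmass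
  norm_num at hmass

lemma inner_cellOp_expoLp (hr : IsInvariantMeasure A b r) (h : IsCordesPair A b δ)
    (k : Fin n → ℤ) : ⟪hr.memLp_ofReal.toLp _, h.cellOp (expoLp k)⟫_ℂ = 0 := by
  have hcell : h.cellOp (expoLp k) =ᵐ[cellMeasure n] fun x =>
      invLapSymb k * ∑ ι, ((jet (A x) (b x) ι : ℝ) : ℂ) * (jetSymb k ι * expo k x) := by
    filter_upwards [coeFn_combCLM h.memLp_ofReal_jet jetInvLap (expoLp k), coeFn_expoLp k,
      ae_all_iff.2 fun ι => Lp.coeFn_smul (jetSymb k ι * invLapSymb k) (expoLp k : L2 n)]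
      with x hcell hexpo hsmul
    rw [IsCordesPair.cellOp, hcell, Finset.mul_sum]
    refine Finset.sum_congr rfl fun ι _ => ?_
    rw [jetInvLap_expoLp, hsmul, Pi.smul_apply, hexpo, smul_eq_mul]
    ring
  rw [hr.inner_toLp, integral_congr_ae (hcell.mono fun x hx =>
    (congrArg ((r x : ℂ) * ·) hx).trans (mul_left_comm _ _ _)), integral_const_mul]
  exact mul_eq_zero_of_right _ (hr.integral_mul_sum_jetSymb_expo k)

lemma inner_cellOp (hr : IsInvariantMeasure A b r) (h : IsCordesPair A b δ) (f : L2 n) :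
    ⟪hr.memLp_ofReal.toLp _, h.cellOp f⟫_ℂ = 0 := by
  have hzero : innerSL ℂ (hr.memLp_ofReal.toLp _) ∘L h.cellOp = 0 :=
    ContinuousLinearMap.ext_on (dense_span_expoLp n)
      (forall_mem_range.2 fun k => hr.inner_cellOp_expoLp h k)
  exact congrArg (· f) hzero

end IsInvariantMeasure

lemma IsCordesPair.existsUnique_cellOp_eq (h : IsCordesPair A b δ) (hr : IsInvariantMeasure A b r)
    {w : L2 n} (hw : ⟪hr.memLp_ofReal.toLp _, w⟫_ℂ = 0) :
    ∃! f, coef f 0 = 0 ∧ h.cellOp f = w := by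
  obtain ⟨T, hT, hTeq⟩ := h.exists_bijective_eq_cellOp
  have hρ : (innerSL ℂ (hr.memLp_ofReal.toLp _)).toLinearMap ≠ 0 := fun hzero =>
    hr.toLp_ne_zero (inner_self_eq_zero.1 (LinearMap.congr_fun hzero _))
  have hker : LinearMap.ker (innerSL ℂ (expoLp 0 : L2 n)).toLinearMap ≤
      LinearMap.ker ((innerSL ℂ (hr.memLp_ofReal.toLp _)).toLinearMap ∘ₗ T.toLinearMap) := by
    intro f hf
    have hf0 : coef f 0 = 0 := (inner_expoLp 0 f).symm.trans hf
    change ⟪hr.memLp_ofReal.toLp _, T f⟫_ℂ = 0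
    rw [hTeq f hf0, hr.inner_cellOp h]
  obtain ⟨f, hf, hTf⟩ := exists_apply_eq_of_ker_le_ker hT.surjective hρ hker hw
  have hf0 : coef f 0 = 0 := (inner_expoLp 0 f).symm.trans hf
  refine ⟨f, ⟨hf0, (hTeq f hf0).symm.trans hTf⟩, fun g hg => hT.injective ?_⟩
  rw [hTeq g hg.1, hg.2]
  exact hTf.symm

end CellOperator

section PeriodicSobolev

variable {n : ℕ}

/-- The periodic function on `ℝⁿ` given on the unit cell by an element of `L²`. -/
def periodicExt (f : L2 n) (x : Fin n → ℝ) : ℂ := f (fractVec x)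

lemma measurable_periodicExt (f : L2 n) : Measurable (periodicExt f) :=
  (Lp.stronglyMeasurable f).measurable.comp measurable_fractVec

lemma isPeriodic_periodicExt (f : L2 n) : IsPeriodic (periodicExt f) :=
  isPeriodic_comp_fractVec f

lemma periodicExt_ae_eq (f : L2 n) : periodicExt f =ᵐ[cellMeasure n] f :=
  comp_fractVec_ae_eq f

lemma memLp_periodicExt (f : L2 n) : MemLp (periodicExt f) 2 (cellMeasure n) :=
  (memLp_congr_ae (periodicExt_ae_eq f)).2 (Lp.memLp f)

lemma toLp_periodicExt (f : L2 n) : (memLp_periodicExt f).toLp (periodicExt f) = f :=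
  Lp.ext ((memLp_periodicExt f).coeFn_toLp.trans (periodicExt_ae_eq f))

lemma integrableOn_re_periodicExt_sq (f : L2 n) :
    IntegrableOn (fun x => (periodicExt f x).re ^ 2) (unitCell n) :=
  (memLp_two_iff_integrable_sq (measurable_periodicExt f).re.aestronglyMeasurable).1
    (memLp_periodicExt f).re

lemma IsPeriodic.locallyIntegrable_of_memLp_two {E : Type*} [NormedAddCommGroup E]
    {f : (Fin n → ℝ) → E} (hper : IsPeriodic f) (hf : MemLp f 2 (cellMeasure n)) :
    LocallyIntegrable f :=
  hper.locallyIntegrable (hf.integrable one_le_two)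

lemma hasWeakJet_re_periodicExt_invLap (f : L2 n) :
    HasWeakJet (fun x => (periodicExt (invLap n f) x).re)
      fun ι x => (periodicExt (jetInvLap ι f) x).re := by
  have hlocInt : ∀ f : L2 n, LocallyIntegrable (periodicExt f) := fun f =>
    (isPeriodic_periodicExt f).locallyIntegrable_of_memLp_two (memLp_periodicExt f)
  refine ((hasWeakJet_iff_coef_eq (isPeriodic_periodicExt _) (fun ι => isPeriodic_periodicExt _)
    (memLp_periodicExt _) fun ι => memLp_periodicExt _).2 fun ι k => ?_).clm_comp (hlocInt _)
    (fun ι => hlocInt _) reCLM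
  rw [toLp_periodicExt, toLp_periodicExt, coef_jetInvLap, coef_invLap, mul_assoc]

lemma HasWeakJet.exists_ae_eq_invLap {u : (Fin n → ℝ) → ℝ} {w : JetIndex n → (Fin n → ℝ) → ℝ}
    (h : HasWeakJet u w) (huper : IsPeriodic u) (hwper : ∀ ι, IsPeriodic (w ι))
    (hu : MemLp u 2 (cellMeasure n)) (hw : ∀ ι, MemLp (w ι) 2 (cellMeasure n))
    (hmean : ∫ x in unitCell n, u x = 0) :
    ∃ f : L2 n, coef f 0 = 0 ∧ (fun x => (u x : ℂ)) =ᵐ[cellMeasure n] invLap n f ∧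
      ∀ ι, (fun x => (w ι x : ℂ)) =ᵐ[cellMeasure n] jetInvLap ι f := by
  have hu' : MemLp (fun x => (u x : ℂ)) 2 (cellMeasure n) := hu.ofReal
  have hw' : ∀ ι, MemLp (fun x => (w ι x : ℂ)) 2 (cellMeasure n) := fun ι => (hw ι).ofReal
  have hjet : HasWeakJet (fun x => (u x : ℂ)) fun ι x => (w ι x : ℂ) :=
    h.clm_comp (huper.locallyIntegrable_of_memLp_two hu)
      (fun ι => (hwper ι).locallyIntegrable_of_memLp_two (hw ι)) ofRealCLM
  have hcoef := (hasWeakJet_iff_coef_eq (fun x m => congrArg ofReal (huper x m))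
    (fun ι x m => congrArg ofReal (hwper ι x m)) hu' hw').1 hjet
  obtain ⟨hf, hinvLap, hjetInvLap⟩ := eq_jetInvLap_of_coef_eq
    (by rw [coef_zero_toLp_ofReal, hmean, ofReal_zero]) hcoef
  refine ⟨_, hf, ?_, fun ι => ?_⟩
  · rw [← hinvLap]
    exact hu'.coeFn_toLp.symm
  · rw [← hjetInvLap]
    exact (hw' ι).coeFn_toLp.symm

end PeriodicSobolev

section Corrector

variable {n : ℕ} {A : (Fin n → ℝ) → Matrix (Fin n) (Fin n) ℝ} {b : (Fin n → ℝ) → Fin n → ℝ}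
  {r : (Fin n → ℝ) → ℝ} {δ : ℝ} {j : Fin n}

lemma hasWeakJet_jet_iff {χ : (Fin n → ℝ) → ℝ} {g : (Fin n → ℝ) → Fin n → ℝ}
    {H : (Fin n → ℝ) → Matrix (Fin n) (Fin n) ℝ} :
    HasWeakJet χ (fun ι x => jet (H x) (g x) ι) ↔
      ∀ φ : (Fin n → ℝ) → ℝ, ContDiff ℝ (⊤ : ℕ∞) φ → HasCompactSupport φ →
        (∀ i, (∫ x : Fin n → ℝ, χ x * pd φ i x) = -∫ x : Fin n → ℝ, g x i * φ x) ∧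
        (∀ i k, (∫ x : Fin n → ℝ, χ x * pd (pd φ k) i x)
          = ∫ x : Fin n → ℝ, H x i k * φ x) := by
  simp only [HasWeakJet, HasWeakPartial, jet, Sum.elim_inl, Sum.elim_inr, smul_eq_mul,
    mul_comm (pd _ _ _)]
  constructor
  · intro h φ hφ hcompact
    have hgrad : ∀ i (ψ : (Fin n → ℝ) → ℝ), ContDiff ℝ (⊤ : ℕ∞) ψ → HasCompactSupport ψ →
        ∫ x, χ x * pd ψ i x = -∫ x, g x i * ψ x := fun i ψ hψ hψc => by
      simpa only [mul_comm (ψ _)] using (h i).1 ψ hψ hψc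
    refine ⟨fun i => hgrad i φ hφ hcompact, fun i k => ?_⟩
    rw [hgrad i _ (contDiff_pd hφ k) (hasCompactSupport_pd hcompact k),
      (h i).2 k φ hφ hcompact, neg_neg]
    simp only [mul_comm (φ _)]
  · intro h i
    refine ⟨fun φ hφ hcompact => ?_, fun k φ hφ hcompact => ?_⟩
    · simpa only [mul_comm (φ _)] using (h φ hφ hcompact).1 i
    · have hgrad := (h _ (contDiff_pd hφ k) (hasCompactSupport_pd hcompact k)).1 i
      rw [(h φ hφ hcompact).2 i k, eq_neg_iff_add_eq_zero, add_comm, ← eq_neg_iff_add_eq_zero]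
        at hgrad
      simpa only [mul_comm (φ _)] using hgrad

/-- The gradient of the real part of the periodic extension of `Δ⁻¹ f`. -/
def gradInvLap (f : L2 n) (x : Fin n → ℝ) : Fin n → ℝ :=
  fun i => (periodicExt (jetInvLap (Sum.inr i) f) x).re

/-- The Hessian of the real part of the periodic extension of `Δ⁻¹ f`. -/
def hessInvLap (f : L2 n) (x : Fin n → ℝ) : Matrix (Fin n) (Fin n) ℝ :=
  Matrix.of fun i k => (periodicExt (jetInvLap (Sum.inl (i, k)) f) x).re

lemma jet_hessInvLap_gradInvLap (f : L2 n) (x : Fin n → ℝ) (ι : JetIndex n) :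
    jet (hessInvLap f x) (gradInvLap f x) ι = (periodicExt (jetInvLap ι f) x).re := by
  cases ι <;> rfl

lemma isPeriodic_gradInvLap (f : L2 n) : IsPeriodic (gradInvLap f) := fun x m =>
  funext fun _ => congrArg re (isPeriodic_periodicExt _ x m)

lemma isPeriodic_hessInvLap (f : L2 n) : IsPeriodic (hessInvLap f) := fun x m =>
  Matrix.ext fun _ _ => congrArg re (isPeriodic_periodicExt _ x m)

lemma isSymm_hessInvLap (f : L2 n) (x : Fin n → ℝ) : (hessInvLap f x).IsSymm := by
  refine Matrix.IsSymm.ext fun i k => ?_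
  have hcomm : jetInvLap (Sum.inl (i, k)) f = jetInvLap (Sum.inl (k, i)) f :=
    ext_coef fun l => by simp only [coef_jetInvLap, jetSymb, jet, Sum.elim_inl, Matrix.of_apply,
      mul_comm (derivSymb i l)]
  simp only [hessInvLap, Matrix.of_apply, hcomm]

lemma integral_re_periodicExt_invLap (f : L2 n) :
    ∫ x in unitCell n, (periodicExt (invLap n f) x).re = 0 := by
  have hint : Integrable (periodicExt (invLap n f)) (cellMeasure n) :=
    (memLp_periodicExt _).integrable one_le_two
  have hcoef := coef_toLp (memLp_periodicExt (invLap n f)) 0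
  simp only [toLp_periodicExt, coef_invLap, invLapSymb_zero, zero_mul, neg_zero, expo_zero,
    mul_one] at hcoef
  exact (reCLM.integral_comp_comm hint).trans (congrArg re hcoef.symm)

namespace IsCordesPair

/-- The `j`-th component of the drift `b` as an element of `L²` of the unit cell. -/
def driftLp (h : IsCordesPair A b δ) (j : Fin n) : L2 n :=
  ((h.memLp_ofReal_jet (Sum.inr j)).mono_exponent le_top).toLp _

lemma coeFn_driftLp (h : IsCordesPair A b δ) (j : Fin n) :
    h.driftLp j =ᵐ[cellMeasure n] fun x => (b x j : ℂ) :=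
  MemLp.coeFn_toLp _

lemma coeFn_neg_driftLp (h : IsCordesPair A b δ) (j : Fin n) :
    ⇑(-h.driftLp j) =ᵐ[cellMeasure n] fun x => -(b x j : ℂ) := by
  filter_upwards [Lp.coeFn_neg (h.driftLp j), h.coeFn_driftLp j] with x hneg hx
  rw [hneg, Pi.neg_apply, hx]

lemma inner_toLp_driftLp (h : IsCordesPair A b δ) (hr : IsInvariantMeasure A b r) (j : Fin n) :
    ⟪hr.memLp_ofReal.toLp _, h.driftLp j⟫_ℂ = (∫ x in unitCell n, r x * b x j : ℝ) := by
  rw [hr.inner_toLp, ← integral_complex_ofReal]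
  refine integral_congr_ae ((h.coeFn_driftLp j).mono fun x hx => ?_)
  simp only [hx, ofReal_mul]

lemma ae_frobInner_add_dotc_invLap (h : IsCordesPair A b δ) (f : L2 n) :
    ∀ᵐ x ∂cellMeasure n, frobInner (A x) (hessInvLap f x) + dotc (b x) (gradInvLap f x) =
      (h.cellOp f x).re := by
  filter_upwards [coeFn_combCLM h.memLp_ofReal_jet jetInvLap f,
    ae_all_iff.2 fun ι => periodicExt_ae_eq (jetInvLap ι f)] with x hcell hext
  simp only [frobInner_add_dotc, jet_hessInvLap_gradInvLap, cellOp, hcell, hext, re_sum,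
    re_ofReal_mul]

lemma isCorrector_of_cellOp_eq (h : IsCordesPair A b δ) {f : L2 n}
    (hf : h.cellOp f = -h.driftLp j) :
    IsCorrector A b j fun x => (periodicExt (invLap n f) x).re := by
  have hmeas : ∀ f : L2 n, Measurable fun x => (periodicExt f x).re := fun f =>
    (measurable_periodicExt f).re
  refine ⟨hmeas _, fun x m => congrArg re (isPeriodic_periodicExt _ x m),
    integrableOn_re_periodicExt_sq _, integral_re_periodicExt_invLap f, gradInvLap f, hessInvLap f,
    fun i => hmeas _, fun i k => hmeas _, isPeriodic_gradInvLap f, isPeriodic_hessInvLap f,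
    fun i => integrableOn_re_periodicExt_sq _, fun i k => integrableOn_re_periodicExt_sq _,
    Eventually.of_forall (isSymm_hessInvLap f), hasWeakJet_jet_iff.1 ?_,
    ae_of_ae_cellMeasure (fun x m hx => ?_) ?_⟩
  · simpa only [jet_hessInvLap_gradInvLap] using hasWeakJet_re_periodicExt_invLap f
  · rwa [h.perA x m, h.perb x m, isPeriodic_gradInvLap f x m, isPeriodic_hessInvLap f x m]
  · filter_upwards [h.ae_frobInner_add_dotc_invLap f, h.coeFn_neg_driftLp j] with x hx hdrift
    rw [← neg_add', hx, hf, hdrift, neg_re, ofReal_re, neg_neg]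

end IsCordesPair

lemma IsCorrector.exists_cellOp_eq {χ : (Fin n → ℝ) → ℝ} (hχ : IsCorrector A b j χ)
    (h : IsCordesPair A b δ) : ∃ f : L2 n, (coef f 0 = 0 ∧ h.cellOp f = -h.driftLp j) ∧
      (fun x => (χ x : ℂ)) =ᵐ[cellMeasure n] invLap n f := by
  obtain ⟨hmeas, hper, hsq, hmean, g, H, hgmeas, hHmeas, hgper, hHper, hgsq, hHsq, -, hweak,
    heq⟩ := hχ
  obtain ⟨f, hf, hχf, hjet⟩ := (hasWeakJet_jet_iff.2 hweak).exists_ae_eq_invLap hper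
    (fun ι x m => by rw [hHper x m, hgper x m]) (memLp_two_of_integrableOn_sq hmeas hsq)
    (Sum.rec (fun p => memLp_two_of_integrableOn_sq (hHmeas p.1 p.2) (hHsq p.1 p.2))
      fun i => memLp_two_of_integrableOn_sq (hgmeas i) (hgsq i)) hmean
  refine ⟨f, ⟨hf, Lp.ext ?_⟩, hχf⟩
  filter_upwards [coeFn_combCLM h.memLp_ofReal_jet jetInvLap f, ae_all_iff.2 hjet,
    h.coeFn_neg_driftLp j, ae_restrict_of_ae heq] with x hcell hjet hdrift heq
  rw [IsCordesPair.cellOp, hcell, hdrift, ← heq, ← neg_add', frobInner_add_dotc]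
  simp only [← hjet, ofReal_neg, ofReal_sum, ofReal_mul, neg_neg]

theorem stmt_3_general (h : IsCordesPair A b δ) (hr : IsInvariantMeasure A b r)
    (hcenter : ∫ x in unitCell n, r x * b x j = 0) :
    ∃ χ : (Fin n → ℝ) → ℝ, IsCorrector A b j χ ∧
      ∀ χ' : (Fin n → ℝ) → ℝ, IsCorrector A b j χ' → ∀ᵐ x, χ' x = χ x := by
  have hsolvable : ⟪hr.memLp_ofReal.toLp _, -h.driftLp j⟫_ℂ = 0 := by
    rw [inner_neg_right, h.inner_toLp_driftLp hr, hcenter, ofReal_zero, neg_zero]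
  obtain ⟨f, ⟨-, hf⟩, hunique⟩ := h.existsUnique_cellOp_eq hr hsolvable
  refine ⟨_, h.isCorrector_of_cellOp_eq hf, fun χ' hχ' =>
    ae_of_ae_cellMeasure (fun x m hx => ?_) ?_⟩
  · rw [hχ'.2.1 x m, isPeriodic_periodicExt _ x m, hx]
  · obtain ⟨f', hf', hχf'⟩ := hχ'.exists_cellOp_eq h
    filter_upwards [hχf', periodicExt_ae_eq (invLap n f)] with x hx hext
    rw [hext, ← hunique f' hf', ← hx, ofReal_re]

end Corrector

/-- In Setting B, under the centering condition `∫_Y r b = 0` (with `r`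
the invariant measure), for each `j` the cell problem `-A:D²χ - b·∇χ = b_j` has a
solution `χ ∈ H²_per(Y)` with zero mean, unique up to equality a.e. -/
theorem stmt_3 {n : ℕ} (hn : 1 ≤ n)
    (A : (Fin n → ℝ) → Matrix (Fin n) (Fin n) ℝ) (b : (Fin n → ℝ) → Fin n → ℝ)
    (lam Lam δ : ℝ) (hAB : SettingB A b lam Lam δ)
    (r : (Fin n → ℝ) → ℝ) (hr : IsInvariantMeasure A b r)
    (hcenter : ∀ i, (∫ x in unitCell n, r x * b x i) = 0) :
    ∀ j : Fin n, ∃ χ : (Fin n → ℝ) → ℝ, IsCorrector A b j χ ∧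
      ∀ χ' : (Fin n → ℝ) → ℝ, IsCorrector A b j χ' →
        ∀ᵐ x ∂(volume : Measure (Fin n → ℝ)), χ' x = χ x :=
  fun j => stmt_3_general (hAB.isCordesPair hn) hr (hcenter j)
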